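/- arXiv:2508.09794 — 3 statements merged into one kernel-verified Lean document; each statement's English description precedes it below -/
import Mathlib

section
/- Let (R, ν) be a normalized BV₀ pair on (−1,1) of class BV₊ on I = (a₋, a₊), and let c ∈ ℝ. For f ∈ D^I_{R,ν} define ĝ_f : [−1,1] → ℝ by ĝ_f(t) = (T_{R,ν}f)(t) + c·f(0)·|t| for t ∈ I, ĝ_f(t) = (lim_{s→a₊⁻}(T_{R,ν}f)(s)/a₊ + c·f(0))·t for t ∈ [a₊,1], and ĝ_f(t) = (lim_{s→a₋⁺}(T_{R,ν}f)(s)/a₋ − c·f(0))·t for t ∈ [−1,a₋]. Then the map f ↦ ĝ_f is a bijection from D^I_{R,ν} onto the set of all continuous functions g : [−1,1] → ℝ satisfying g(t) = (g(a₊)/a₊)·t for all t ∈ [a₊,1] and g(t) = (g(a₋)/a₋)·t for all t ∈ [−1,a₋]. -/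
open MeasureTheory Set Filter Function Topology

/-- A normalized BV₀ pair on `(-1,1)`: a signed Borel measure, represented by its
mutually singular positive part `νp` and negative part `νm`, that is finite on compact
subsets of `(-1,1)`, gives no mass to `{0}` and lives on `(-1,1)`, together with a
function `R` satisfying the fundamental-theorem-of-calculus relations. -/
structure NormBV0 where
  R : ℝ → ℝ
  νp : Measure ℝ
  νm : Measure ℝ
  sing : νp.MutuallySingular νm
  supp_p : νp (Set.Ioo (-1 : ℝ) 1)ᶜ = 0
  supp_m : νm (Set.Ioo (-1 : ℝ) 1)ᶜ = 0
  locfin_p : ∀ K : Set ℝ, IsCompact K → K ⊆ Set.Ioo (-1 : ℝ) 1 → νp K ≠ ⊤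
  locfin_m : ∀ K : Set ℝ, IsCompact K → K ⊆ Set.Ioo (-1 : ℝ) 1 → νm K ≠ ⊤
  zero_p : νp {0} = 0
  zero_m : νm {0} = 0
  fund_pos : ∀ t ∈ Set.Ico (0 : ℝ) 1,
    R t = R 0 - ((∫ s in Set.Ioc (0 : ℝ) t, s ∂νp) - (∫ s in Set.Ioc (0 : ℝ) t, s ∂νm))
  fund_neg : ∀ t ∈ Set.Ioc (-1 : ℝ) 0,
    R t = R 0 + ((∫ s in Set.Ico t (0 : ℝ), s ∂νp) - (∫ s in Set.Ico t (0 : ℝ), s ∂νm))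

/-- The integral of `f` over `S` with respect to the signed measure `νp - νm`. -/
noncomputable def NormBV0.integ (P : NormBV0) (S : Set ℝ) (f : ℝ → ℝ) : ℝ :=
  (∫ s in S, f s ∂P.νp) - (∫ s in S, f s ∂P.νm)

/-- The transform `T_{R,ν} f`. -/
noncomputable def NormBV0.T (P : NormBV0) (f : ℝ → ℝ) (t : ℝ) : ℝ :=
  if 0 < t then P.R t * f t + t * P.integ (Set.Ioc 0 t) f
  else P.R t * f t - t * P.integ (Set.Ico t 0) f

/-- The pair `(R,ν)` is of class `BV₊` on the subinterval `I = (am, ap)`: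
`|ν|((-1,1)) < ∞`, `R > 0` on `I`, and `ν` or `-ν` is nonnegative. -/
def NormBV0.BVplusOn (P : NormBV0) (am ap : ℝ) : Prop :=
  P.νp (Set.Ioo (-1 : ℝ) 1) ≠ ⊤ ∧ P.νm (Set.Ioo (-1 : ℝ) 1) ≠ ⊤ ∧
  (∀ t ∈ Set.Ioo am ap, 0 < P.R t) ∧ (P.νm = 0 ∨ P.νp = 0)

/-- The class `D^I_{R,ν}` of continuous functions on `I = (am, ap)` whose four boundary
limits exist. -/
def NormBV0.memDI (P : NormBV0) (am ap : ℝ) (f : ℝ → ℝ) : Prop :=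
  ContinuousOn f (Set.Ioo am ap) ∧
  (∃ L : ℝ, Tendsto (fun t => P.R t * f t) (𝓝[<] ap) (𝓝 L)) ∧
  (∃ L : ℝ, Tendsto (fun t => P.R t * f t) (𝓝[>] am) (𝓝 L)) ∧
  (∃ L : ℝ, Tendsto (fun t => P.integ (Set.Ioc 0 t) f) (𝓝[<] ap) (𝓝 L)) ∧
  (∃ L : ℝ, Tendsto (fun t => P.integ (Set.Ico t 0) f) (𝓝[>] am) (𝓝 L))

section HalfInterval

variable {μ : Measure ℝ}

/-- The weight `t ↦ r - σ ∫_{(0,t]} s dμ(s)`. -/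
noncomputable def bvWeight (r σ : ℝ) (μ : Measure ℝ) (t : ℝ) : ℝ :=
  r - σ * ∫ s in Ioc 0 t, s ∂μ

/-- The left limit `t ↦ r - σ ∫_{(0,t)} s dμ(s)` of `bvWeight`. -/
noncomputable def bvWeightLeft (r σ : ℝ) (μ : Measure ℝ) (t : ℝ) : ℝ :=
  r - σ * ∫ s in Ioo 0 t, s ∂μ

/-- The transform with weight `bvWeight r σ μ` on a half-interval `[0,a)`. -/
noncomputable def bvTransform (r σ : ℝ) (μ : Measure ℝ) (f : ℝ → ℝ) (t : ℝ) : ℝ :=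
  bvWeight r σ μ t * f t + t * (σ * ∫ s in Ioc 0 t, f s ∂μ)

/-- The kernel of the inverse transform. -/
noncomputable def bvKernel (r σ : ℝ) (μ : Measure ℝ) (g : ℝ → ℝ) (t : ℝ) : ℝ :=
  g t / (bvWeight r σ μ t * bvWeightLeft r σ μ t)

/-- The inverse of `bvTransform`. -/
noncomputable def bvInverse (r σ : ℝ) (μ : Measure ℝ) (g : ℝ → ℝ) (t : ℝ) : ℝ :=
  g t / bvWeight r σ μ t - σ * t * ∫ s in Ioc 0 t, bvKernel r σ μ g s ∂μ

lemma tendsto_setIntegral_Ioc_right {k : ℝ → ℝ} {t b : ℝ} (htb : t < b)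
    (hk : IntegrableOn k (Ioc 0 b) μ) :
    Tendsto (fun s => ∫ u in Ioc 0 s, k u ∂μ) (𝓝[>] t) (𝓝 (∫ u in Ioc 0 t, k u ∂μ)) := by
  simp_rw [← integral_indicator measurableSet_Ioc]
  have hev : ∀ᶠ s in 𝓝[>] t, s < b := by
    filter_upwards [Ioo_mem_nhdsGT htb] with s hs using hs.2
  have hki := hk.integrable_indicator measurableSet_Ioc
  refine tendsto_integral_filter_of_dominated_convergence
    (fun u => ‖(Ioc 0 b).indicator k u‖) ?_ ?_ hki.norm ?_
  · filter_upwards [hev] with s hs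
    exact ((hk.mono_set (Ioc_subset_Ioc_right hs.le)).integrable_indicator
      measurableSet_Ioc).aestronglyMeasurable
  · filter_upwards [hev] with s hs
    refine Eventually.of_forall fun u => ?_
    exact norm_indicator_le_of_subset (Ioc_subset_Ioc_right hs.le) _ _
  · refine Eventually.of_forall fun u => ?_
    refine Tendsto.congr' ?_ tendsto_const_nhds
    rcases le_or_gt u t with hu | hu
    · filter_upwards [self_mem_nhdsWithin] with s hs
      have : u ≤ s := hu.trans (le_of_lt hs)
      simp [indicator, hu, this]
    · filter_upwards [Ioo_mem_nhdsGT hu] with s hs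
      simp [indicator, hu.not_ge, hs.2.not_ge]

lemma tendsto_setIntegral_Ioc_left {k : ℝ → ℝ} {t : ℝ}
    (hk : IntegrableOn k (Ioo 0 t) μ) :
    Tendsto (fun s => ∫ u in Ioc 0 s, k u ∂μ) (𝓝[<] t) (𝓝 (∫ u in Ioo 0 t, k u ∂μ)) := by
  simp_rw [← integral_indicator measurableSet_Ioc, ← integral_indicator measurableSet_Ioo]
  have hki := hk.integrable_indicator measurableSet_Ioo
  have hsub : ∀ s < t, Ioc 0 s ⊆ Ioo 0 t := fun s hs u hu => ⟨hu.1, hu.2.trans_lt hs⟩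
  refine tendsto_integral_filter_of_dominated_convergence
    (fun u => ‖(Ioo 0 t).indicator k u‖) ?_ ?_ hki.norm ?_
  · filter_upwards [self_mem_nhdsWithin] with s hs
    exact ((hk.mono_set (hsub s hs)).integrable_indicator
      measurableSet_Ioc).aestronglyMeasurable
  · filter_upwards [self_mem_nhdsWithin] with s hs
    exact Eventually.of_forall fun u => norm_indicator_le_of_subset (hsub s hs) _ _
  · refine Eventually.of_forall fun u => ?_
    refine Tendsto.congr' ?_ tendsto_const_nhds
    rcases lt_or_ge u t with hu | hu
    · filter_upwards [Ioo_mem_nhdsLT hu] with s hs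
      simp [indicator, hu, hs.1.le]
    · filter_upwards [self_mem_nhdsWithin] with s hs
      have : s < u := lt_of_lt_of_le hs hu
      simp [indicator, hu.not_gt, this.not_ge]

lemma setIntegral_Ioc_eq_Ioo_add {k : ℝ → ℝ} {t : ℝ} (ht : 0 < t)
    (hk : IntegrableOn k (Ioc 0 t) μ) :
    ∫ u in Ioc 0 t, k u ∂μ = (∫ u in Ioo 0 t, k u ∂μ) + μ.real {t} * k t := by
  rw [← Ioo_union_right ht] at hk ⊢
  rw [setIntegral_union (by simp) (measurableSet_singleton t) hk.left_of_union
    hk.right_of_union, integral_singleton, smul_eq_mul]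

@[simp] lemma bvWeight_zero (r σ : ℝ) : bvWeight r σ μ 0 = r := by simp [bvWeight]

@[simp] lemma bvTransform_zero (r σ : ℝ) (f : ℝ → ℝ) : bvTransform r σ μ f 0 = r * f 0 := by
  simp [bvTransform]

/-- Continuity on `[0,a)` from one-sided limits. -/
lemma continuousOn_Ico_of_tendsto {h : ℝ → ℝ} {a : ℝ}
    (hr : ∀ t ∈ Ico 0 a, Tendsto h (𝓝[>] t) (𝓝 (h t)))
    (hl : ∀ t ∈ Ioo 0 a, Tendsto h (𝓝[<] t) (𝓝 (h t))) : ContinuousOn h (Ico 0 a) := by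
  intro t ht
  rcases ht.1.eq_or_lt with h0 | h0
  · subst h0
    have : ContinuousWithinAt h (Ici 0) 0 :=
      continuousWithinAt_Ioi_iff_Ici.1 (hr 0 ht)
    exact this.mono Ico_subset_Ici_self
  · exact (continuousAt_iff_continuous_left'_right'.2
      ⟨hl t ⟨h0, ht.2⟩, hr t ht⟩).continuousWithinAt

lemma min_le_sub_mul {r σ x y : ℝ} (hx : 0 ≤ x) (hxy : x ≤ y) :
    min r (r - σ * y) ≤ r - σ * x := by
  rcases le_total 0 σ with h | h
  · exact (min_le_right _ _).trans (by nlinarith)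
  · exact (min_le_left _ _).trans (by nlinarith)

lemma setIntegral_id_mono {S T : Set ℝ} (hT : MeasurableSet T) (hT0 : ∀ s ∈ T, 0 ≤ s)
    (hi : IntegrableOn (fun s : ℝ => s) T μ) (hST : S ⊆ T) :
    ∫ s in S, s ∂μ ≤ ∫ s in T, s ∂μ :=
  setIntegral_mono_set hi (by filter_upwards [ae_restrict_mem hT] with s hs using hT0 s hs)
    (Eventually.of_forall hST)

lemma bvTransform_id (r σ t : ℝ) : bvTransform r σ μ (fun s => s) t = r * t := by
  rw [bvTransform, bvWeight]
  ring

variable [IsFiniteMeasure μ]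

lemma integrableOn_of_continuousOn_Ico {f : ℝ → ℝ} {a t : ℝ} (hf : ContinuousOn f (Ico 0 a))
    (ht : t < a) : IntegrableOn f (Ioc 0 t) μ :=
  ((hf.mono (Icc_subset_Ico_right ht)).integrableOn_compact isCompact_Icc).mono_set
    Ioc_subset_Icc_self

lemma integrableOn_id_Ioc (t : ℝ) : IntegrableOn (fun s : ℝ => s) (Ioc 0 t) μ :=
  (continuous_id.continuousOn.integrableOn_compact isCompact_Icc).mono_set Ioc_subset_Icc_self

lemma integrableOn_id_Ioo (t : ℝ) : IntegrableOn (fun s : ℝ => s) (Ioo 0 t) μ :=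
  (integrableOn_id_Ioc t).mono_set Ioo_subset_Ioc_self

lemma monotone_setIntegral_id_Ioc : Monotone fun t : ℝ => ∫ s in Ioc 0 t, s ∂μ :=
  fun _ t h => setIntegral_id_mono measurableSet_Ioc (fun _ hs => hs.1.le)
    (integrableOn_id_Ioc t) (Ioc_subset_Ioc_right h)

lemma monotone_setIntegral_id_Ioo : Monotone fun t : ℝ => ∫ s in Ioo 0 t, s ∂μ :=
  fun _ t h => setIntegral_id_mono measurableSet_Ioo (fun _ hs => hs.1.le)
    (integrableOn_id_Ioo t) (Ioo_subset_Ioo_right h)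

lemma measurable_bvWeight (r σ : ℝ) : Measurable (bvWeight r σ μ) :=
  measurable_const.sub (monotone_setIntegral_id_Ioc.measurable.const_mul σ)

lemma measurable_bvWeightLeft (r σ : ℝ) : Measurable (bvWeightLeft r σ μ) :=
  measurable_const.sub (monotone_setIntegral_id_Ioo.measurable.const_mul σ)

lemma min_le_bvWeight (r σ : ℝ) {s t : ℝ} (hst : s ≤ t) :
    min r (bvWeight r σ μ t) ≤ bvWeight r σ μ s :=
  min_le_sub_mul (setIntegral_nonneg measurableSet_Ioc fun _ h => h.1.le)
    (monotone_setIntegral_id_Ioc hst)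

lemma min_le_bvWeightLeft (r σ : ℝ) {s t : ℝ} (hst : s ≤ t) :
    min r (bvWeight r σ μ t) ≤ bvWeightLeft r σ μ s :=
  min_le_sub_mul (setIntegral_nonneg measurableSet_Ioo fun _ h => h.1.le)
    (setIntegral_id_mono measurableSet_Ioc (fun _ hs => hs.1.le) (integrableOn_id_Ioc t)
      (Ioo_subset_Ioc_self.trans (Ioc_subset_Ioc_right hst)))

lemma min_left_le_bvWeight (r σ : ℝ) {s t : ℝ} (hst : s < t) :
    min r (bvWeightLeft r σ μ t) ≤ bvWeight r σ μ s :=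
  min_le_sub_mul (setIntegral_nonneg measurableSet_Ioc fun _ h => h.1.le)
    (setIntegral_id_mono measurableSet_Ioo (fun _ hs => hs.1.le) (integrableOn_id_Ioo t)
      fun _ hu => ⟨hu.1, hu.2.trans_lt hst⟩)

lemma min_left_le_bvWeightLeft (r σ : ℝ) {s t : ℝ} (hst : s ≤ t) :
    min r (bvWeightLeft r σ μ t) ≤ bvWeightLeft r σ μ s :=
  min_le_sub_mul (setIntegral_nonneg measurableSet_Ioo fun _ h => h.1.le)
    (monotone_setIntegral_id_Ioo hst)

lemma bvWeightLeft_eq_add (r σ : ℝ) {t : ℝ} (ht : 0 < t) :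
    bvWeightLeft r σ μ t = bvWeight r σ μ t + σ * (μ.real {t} * t) := by
  simp only [bvWeight, bvWeightLeft, setIntegral_Ioc_eq_Ioo_add ht (integrableOn_id_Ioc t)]
  ring

lemma tendsto_bvWeight_right (r σ t : ℝ) :
    Tendsto (bvWeight r σ μ) (𝓝[>] t) (𝓝 (bvWeight r σ μ t)) :=
  ((tendsto_setIntegral_Ioc_right (lt_add_one t)
    (integrableOn_id_Ioc _)).const_mul σ).const_sub r

lemma tendsto_bvWeight_left (r σ t : ℝ) :
    Tendsto (bvWeight r σ μ) (𝓝[<] t) (𝓝 (bvWeightLeft r σ μ t)) :=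
  ((tendsto_setIntegral_Ioc_left (integrableOn_id_Ioo t)).const_mul σ).const_sub r

lemma continuousOn_bvTransform (r σ : ℝ) {f : ℝ → ℝ} {a : ℝ} (hf : ContinuousOn f (Ico 0 a)) :
    ContinuousOn (bvTransform r σ μ f) (Ico 0 a) := by
  refine continuousOn_Ico_of_tendsto (fun t ht => ?_) (fun t ht => ?_)
  · obtain ⟨b, htb, hba⟩ := exists_between ht.2
    have hft : Tendsto f (𝓝[>] t) (𝓝 (f t)) := by
      have := (hf t ht).mono (Ioo_subset_Ico_self.trans (Ico_subset_Ico_left ht.1) :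
        Ioo t a ⊆ Ico 0 a)
      rwa [ContinuousWithinAt, nhdsWithin_Ioo_eq_nhdsGT ht.2] at this
    exact ((tendsto_bvWeight_right r σ t).mul hft).add
      ((tendsto_nhdsWithin_of_tendsto_nhds tendsto_id).mul ((tendsto_setIntegral_Ioc_right htb
        (integrableOn_of_continuousOn_Ico hf hba)).const_mul σ))
  · have hint := integrableOn_of_continuousOn_Ico (μ := μ) hf ht.2
    have hft : Tendsto f (𝓝[<] t) (𝓝 (f t)) :=
      ((hf t (Ioo_subset_Ico_self ht)).continuousAt (Ico_mem_nhds ht.1 ht.2)).continuousWithinAt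
    have := ((tendsto_bvWeight_left (μ := μ) r σ t).mul hft).add
      ((tendsto_nhdsWithin_of_tendsto_nhds tendsto_id).mul ((tendsto_setIntegral_Ioc_left
        (hint.mono_set Ioo_subset_Ioc_self)).const_mul σ))
    have heq : bvTransform r σ μ f t = bvWeightLeft r σ μ t * f t +
        t * (σ * ∫ u in Ioo 0 t, f u ∂μ) := by
      rw [bvTransform, bvWeightLeft_eq_add r σ ht.1, setIntegral_Ioc_eq_Ioo_add ht.1 hint]
      ring
    rw [heq]
    exact this

lemma eq_zero_of_bvTransform_of_nonpos {r σ a : ℝ} (hr : 0 < r) (hσ : σ ≤ 0) {f : ℝ → ℝ}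
    (hf : ContinuousOn f (Ico 0 a)) (h : ∀ t ∈ Ico 0 a, bvTransform r σ μ f t = 0) :
    ∀ t ∈ Ico 0 a, f t = 0 := by
  intro t ht
  have hint := integrableOn_of_continuousOn_Ico (μ := μ) hf ht.2
  have hw : ∀ s, r ≤ bvWeight r σ μ s := fun s => by
    have : 0 ≤ ∫ u in Ioc 0 s, u ∂μ := setIntegral_nonneg measurableSet_Ioc fun _ h => h.1.le
    unfold bvWeight
    nlinarith
  have hwpos : ∀ s, 0 < bvWeight r σ μ s := fun s => hr.trans_le (hw s)
  have habs : ∀ s ∈ Icc 0 t,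
      bvWeight r σ μ s * |f s| = s * (-σ * |∫ u in Ioc 0 s, f u ∂μ|) := by
    intro s hs
    have h0 := h s ⟨hs.1, hs.2.trans_lt ht.2⟩
    have h1 : bvWeight r σ μ s * f s = -(s * (σ * ∫ u in Ioc 0 s, f u ∂μ)) := by
      unfold bvTransform at h0
      linarith
    have h2 := congrArg abs h1
    rwa [abs_neg, abs_mul, abs_mul, abs_mul, abs_of_pos (hwpos s), abs_of_nonneg hs.1,
      abs_of_nonpos hσ] at h2
  set θ := 1 - r / bvWeight r σ μ t with hθ
  have hθ0 : 0 ≤ θ := by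
    rw [hθ, sub_nonneg, div_le_one (hwpos t)]
    exact hw t
  have hθ1 : θ < 1 := by
    rw [hθ]
    have := div_pos hr (hwpos t)
    linarith
  have hstep : ∀ M, 0 ≤ M → (∀ s ∈ Icc 0 t, |f s| ≤ M * s) →
      ∀ s ∈ Icc 0 t, |f s| ≤ M * θ * s := by
    intro M hM hb s hs
    have hF : |∫ u in Ioc 0 s, f u ∂μ| ≤ M * ∫ u in Ioc 0 s, u ∂μ := by
      rw [← integral_const_mul]
      refine (abs_integral_le_integral_abs).trans (setIntegral_mono_on ?_ ?_ measurableSet_Ioc ?_)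
      · exact (hint.mono_set (Ioc_subset_Ioc_right hs.2)).abs
      · exact (integrableOn_id_Ioc s).const_mul M
      · exact fun u hu => hb u ⟨hu.1.le, hu.2.trans hs.2⟩
    have hwm : bvWeight r σ μ s ≤ bvWeight r σ μ t := by
      have := monotone_setIntegral_id_Ioc (μ := μ) hs.2
      simp only [bvWeight] at this ⊢
      nlinarith
    have h1 : bvWeight r σ μ s * |f s| ≤ s * (M * (bvWeight r σ μ s - r)) := by
      rw [habs s hs]
      refine mul_le_mul_of_nonneg_left ?_ hs.1
      have := mul_le_mul_of_nonneg_left hF (neg_nonneg.2 hσ)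
      refine this.trans (le_of_eq ?_)
      unfold bvWeight
      ring
    have h2 : bvWeight r σ μ s - r ≤ bvWeight r σ μ s * θ := by
      have h3 : bvWeight r σ μ s * (r / bvWeight r σ μ t) ≤ r := by
        rw [← mul_div_assoc, div_le_iff₀ (hwpos t)]
        nlinarith
      rw [hθ]
      linarith
    refine le_of_mul_le_mul_left (h1.trans ?_) (hwpos s)
    have := mul_le_mul_of_nonneg_left h2 (mul_nonneg hs.1 hM)
    linarith
  obtain ⟨B, hB⟩ := isCompact_Icc.exists_bound_of_continuousOn
    (hf.mono (Icc_subset_Ico_right ht.2))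
  have hB0 : 0 ≤ B := (norm_nonneg _).trans (hB 0 ⟨le_rfl, ht.1⟩)
  have hM : 0 ≤ -σ * (B * μ.real univ) / r :=
    div_nonneg (mul_nonneg (neg_nonneg.2 hσ) (mul_nonneg hB0 measureReal_nonneg)) hr.le
  have hinit : ∀ s ∈ Icc 0 t, |f s| ≤ -σ * (B * μ.real univ) / r * s := by
    intro s hs
    have hF : |∫ u in Ioc 0 s, f u ∂μ| ≤ B * μ.real univ := by
      refine (norm_setIntegral_le_of_norm_le_const (measure_lt_top μ _)
        fun u hu => hB u ⟨hu.1.le, hu.2.trans hs.2⟩).trans ?_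
      exact mul_le_mul_of_nonneg_left (measureReal_mono (subset_univ _)) hB0
    have h1 : r * |f s| ≤ s * (-σ * (B * μ.real univ)) :=
      (mul_le_mul_of_nonneg_right (hw s) (abs_nonneg _)).trans ((habs s hs).le.trans
        (mul_le_mul_of_nonneg_left (mul_le_mul_of_nonneg_left hF (neg_nonneg.2 hσ)) hs.1))
    rw [div_mul_eq_mul_div, le_div_iff₀ hr]
    linarith
  set M := -σ * (B * μ.real univ) / r
  have hiter : ∀ n : ℕ, ∀ s ∈ Icc 0 t, |f s| ≤ M * θ ^ n * s := by
    intro n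
    induction n with
    | zero => simpa using hinit
    | succ n ih =>
      rw [pow_succ, ← mul_assoc]
      exact hstep _ (mul_nonneg hM (pow_nonneg hθ0 n)) ih
  have hlim : Tendsto (fun n : ℕ => M * θ ^ n * t) atTop (𝓝 (M * 0 * t)) :=
    ((tendsto_pow_atTop_nhds_zero_of_lt_one hθ0 hθ1).const_mul M).mul_const t
  have := ge_of_tendsto' hlim fun n => hiter n t ⟨ht.1, le_rfl⟩
  rw [mul_zero, zero_mul] at this
  exact abs_nonpos_iff.1 this

lemma nonneg_of_bvTransform_of_nonneg {r σ a : ℝ} (hσ : 0 ≤ σ) {f : ℝ → ℝ}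
    (hw : ∀ t ∈ Ico 0 a, 0 < bvWeight r σ μ t)
    (hf : ContinuousOn f (Ico 0 a)) (h : ∀ t ∈ Ico 0 a, bvTransform r σ μ f t = 0) :
    ∀ t ∈ Ico 0 a, 0 ≤ f t := by
  intro t ht
  by_contra! hneg
  have hint := integrableOn_of_continuousOn_Ico (μ := μ) hf ht.2
  have hf0 : f 0 = 0 := by
    have h0 := h 0 ⟨le_rfl, ht.1.trans_lt ht.2⟩
    have hr := hw 0 ⟨le_rfl, ht.1.trans_lt ht.2⟩
    rw [bvTransform_zero] at h0
    rw [bvWeight_zero] at hr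
    exact (mul_eq_zero.1 h0).resolve_left hr.ne'
  have hcont := hf.mono (Icc_subset_Ico_right ht.2)
  obtain ⟨u, ⟨hu, hfu⟩, hmax⟩ : ∃ u, IsGreatest (Icc 0 t ∩ f ⁻¹' Ici 0) u :=
    (isCompact_Icc.of_isClosed_subset (hcont.preimage_isClosed_of_isClosed isClosed_Icc
      isClosed_Ici) inter_subset_left).exists_isGreatest ⟨0, ⟨le_rfl, ht.1⟩, hf0.ge⟩
  have hlt : ∀ s ∈ Ioc u t, f s < 0 := by
    intro s hs
    by_contra! hs0
    exact hs.1.not_ge (hmax ⟨⟨hu.1.trans hs.1.le, hs.2⟩, hs0⟩)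
  have hFu : σ * ∫ s in Ioc 0 u, f s ∂μ ≤ 0 := by
    rcases hu.1.eq_or_lt with h0 | h0
    · simp [← h0]
    · have h1 := h u ⟨hu.1, hu.2.trans_lt ht.2⟩
      have h2 := mul_nonneg (hw u ⟨hu.1, hu.2.trans_lt ht.2⟩).le hfu
      unfold bvTransform at h1
      by_contra! h3
      have := mul_pos h0 h3
      linarith
  have hsplit : ∫ s in Ioc 0 t, f s ∂μ = (∫ s in Ioc 0 u, f s ∂μ) + ∫ s in Ioc u t, f s ∂μ := by
    rw [← Ioc_union_Ioc_eq_Ioc hu.1 hu.2]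
    exact setIntegral_union (Ioc_disjoint_Ioc_of_le le_rfl) measurableSet_Ioc
      (hint.mono_set (Ioc_subset_Ioc_right hu.2)) (hint.mono_set (Ioc_subset_Ioc_left hu.1))
  have hle : ∫ s in Ioc u t, f s ∂μ ≤ 0 :=
    setIntegral_nonpos measurableSet_Ioc fun s hs => (hlt s hs).le
  have h1 := h t ht
  have h2 := mul_neg_of_pos_of_neg (hw t ht) hneg
  have h3 : t * (σ * ∫ s in Ioc 0 t, f s ∂μ) ≤ 0 := by
    rw [hsplit, mul_add]
    exact mul_nonpos_of_nonneg_of_nonpos ht.1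
      (add_nonpos hFu (mul_nonpos_of_nonneg_of_nonpos hσ hle))
  unfold bvTransform at h1
  linarith

lemma bvTransform_sub (r σ : ℝ) {f₁ f₂ : ℝ → ℝ} {a t : ℝ} (hf₁ : ContinuousOn f₁ (Ico 0 a))
    (hf₂ : ContinuousOn f₂ (Ico 0 a)) (ht : t < a) :
    bvTransform r σ μ (fun s => f₁ s - f₂ s) t =
      bvTransform r σ μ f₁ t - bvTransform r σ μ f₂ t := by
  unfold bvTransform
  rw [integral_sub (integrableOn_of_continuousOn_Ico hf₁ ht)
    (integrableOn_of_continuousOn_Ico hf₂ ht)]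
  ring

/-- The transform is injective on continuous functions. -/
lemma eq_of_bvTransform_eq {r σ a : ℝ} (hr : 0 < r) {f₁ f₂ : ℝ → ℝ}
    (hw : ∀ t ∈ Ico 0 a, 0 < bvWeight r σ μ t)
    (hf₁ : ContinuousOn f₁ (Ico 0 a)) (hf₂ : ContinuousOn f₂ (Ico 0 a))
    (h : ∀ t ∈ Ico 0 a, bvTransform r σ μ f₁ t = bvTransform r σ μ f₂ t) :
    ∀ t ∈ Ico 0 a, f₁ t = f₂ t := by
  intro t ht
  have h₁₂ : ∀ t ∈ Ico 0 a, bvTransform r σ μ (fun s => f₁ s - f₂ s) t = 0 := fun t ht => by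
    rw [bvTransform_sub r σ hf₁ hf₂ ht.2, h t ht, sub_self]
  have h₂₁ : ∀ t ∈ Ico 0 a, bvTransform r σ μ (fun s => f₂ s - f₁ s) t = 0 := fun t ht => by
    rw [bvTransform_sub r σ hf₂ hf₁ ht.2, h t ht, sub_self]
  rcases le_total 0 σ with hσ | hσ
  · exact le_antisymm
      (sub_nonneg.1 (nonneg_of_bvTransform_of_nonneg hσ hw (hf₂.sub hf₁) h₂₁ t ht))
      (sub_nonneg.1 (nonneg_of_bvTransform_of_nonneg hσ hw (hf₁.sub hf₂) h₁₂ t ht))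
  · exact sub_eq_zero.1 (eq_zero_of_bvTransform_of_nonpos hr hσ (hf₁.sub hf₂) h₁₂ t ht)

lemma integrableOn_bvKernel_of_le {r σ δ b : ℝ} {g : ℝ → ℝ} (hg : Continuous g) (hδ : 0 < δ)
    {S : Set ℝ} (hS : MeasurableSet S) (hSb : S ⊆ Icc 0 b)
    (hw : ∀ s ∈ S, δ ≤ bvWeight r σ μ s) (hwl : ∀ s ∈ S, δ ≤ bvWeightLeft r σ μ s) :
    IntegrableOn (bvKernel r σ μ g) S μ := by
  obtain ⟨C, hC⟩ := (isCompact_Icc (a := (0 : ℝ)) (b := b)).exists_bound_of_continuousOn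
    hg.continuousOn
  have hmeas : Measurable (bvKernel r σ μ g) :=
    hg.measurable.div ((measurable_bvWeight r σ).mul (measurable_bvWeightLeft r σ))
  refine IntegrableOn.of_bound (measure_lt_top μ S) hmeas.aestronglyMeasurable
    (C / (δ * δ)) ?_
  filter_upwards [ae_restrict_mem hS] with s hs
  have h1 := hw s hs
  have h2 := hwl s hs
  have h3 := hC s (hSb hs)
  have hprod : δ * δ ≤ bvWeight r σ μ s * bvWeightLeft r σ μ s :=
    mul_le_mul h1 h2 hδ.le (hδ.le.trans h1)
  rw [bvKernel, norm_div, Real.norm_of_nonneg ((mul_pos hδ hδ).le.trans hprod)]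
  exact div_le_div₀ ((norm_nonneg _).trans h3) h3 (mul_pos hδ hδ) hprod

lemma integrableOn_bvKernel {r σ t : ℝ} {g : ℝ → ℝ} (hg : Continuous g) (hr : 0 < r)
    (hw : 0 < bvWeight r σ μ t) : IntegrableOn (bvKernel r σ μ g) (Ioc 0 t) μ :=
  integrableOn_bvKernel_of_le hg (lt_min hr hw) measurableSet_Ioc Ioc_subset_Icc_self
    (fun _ hs => min_le_bvWeight r σ hs.2) (fun _ hs => min_le_bvWeightLeft r σ hs.2)

/-- Fubini's theorem on the triangle `0 < u ≤ s ≤ t`. -/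
lemma setIntegral_mul_setIntegral_Ioc {k : ℝ → ℝ} {t : ℝ} (hk : IntegrableOn k (Ioc 0 t) μ) :
    ∫ s in Ioc 0 t, s * (∫ u in Ioc 0 s, k u ∂μ) ∂μ =
      ∫ u in Ioc 0 t, k u * (∫ s in Icc u t, s ∂μ) ∂μ := by
  have hmeas : MeasurableSet {p : ℝ × ℝ | p.2 ≤ p.1} := measurableSet_le measurable_snd measurable_fst
  have hint : Integrable (Function.uncurry fun s u : ℝ =>
      {p : ℝ × ℝ | p.2 ≤ p.1}.indicator (fun p => p.1 * k p.2) (s, u))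
      ((μ.restrict (Ioc 0 t)).prod (μ.restrict (Ioc 0 t))) :=
    ((integrableOn_id_Ioc (μ := μ) t).integrable.mul_prod hk.integrable).indicator hmeas
  have hswap := integral_integral_swap hint
  calc _ = ∫ s in Ioc 0 t, (∫ u in Ioc 0 t,
        {p : ℝ × ℝ | p.2 ≤ p.1}.indicator (fun p => p.1 * k p.2) (s, u) ∂μ) ∂μ := by
        refine setIntegral_congr_fun measurableSet_Ioc fun s hs => ?_
        have hset : Ioc 0 t ∩ Iic s = Ioc 0 s := by
          rw [Ioc_inter_Iic, min_eq_right hs.2]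
        change _ = ∫ u in Ioc 0 t, (Iic s).indicator (fun u => s * k u) u ∂μ
        rw [setIntegral_indicator measurableSet_Iic, hset, integral_const_mul]
    _ = _ := hswap
    _ = _ := by
        refine setIntegral_congr_fun measurableSet_Ioc fun u hu => ?_
        have hset : Ioc 0 t ∩ Ici u = Icc u t := by
          ext x
          exact ⟨fun hx => ⟨hx.2, hx.1.2⟩, fun hx => ⟨⟨hu.1.trans_le hx.1, hx.2⟩, hx.1⟩⟩
        change ∫ s in Ioc 0 t, (Ici u).indicator (fun s => s * k u) s ∂μ = _
        rw [setIntegral_indicator measurableSet_Ici, hset, integral_mul_const, mul_comm]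

lemma mul_setIntegral_Icc_id (r σ : ℝ) {u t : ℝ} (hu : 0 < u) (hut : u ≤ t) :
    σ * ∫ s in Icc u t, s ∂μ = bvWeightLeft r σ μ u - bvWeight r σ μ t := by
  have h : Ioc 0 t = Ioo 0 u ∪ Icc u t := (Ioo_union_Icc_eq_Ioc hu hut).symm
  have hdisj : Disjoint (Ioo 0 u) (Icc u t) :=
    Set.disjoint_left.2 fun x hx hx' => hx.2.not_ge hx'.1
  have hi := integrableOn_id_Ioc (μ := μ) t
  rw [h] at hi
  rw [bvWeight, bvWeightLeft, h, setIntegral_union hdisj measurableSet_Icc hi.left_of_union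
    hi.right_of_union]
  ring

lemma continuousOn_bvInverse {r σ a : ℝ} {g : ℝ → ℝ} (hg : Continuous g) (hr : 0 < r)
    (hw : ∀ t ∈ Ico 0 a, 0 < bvWeight r σ μ t) :
    ContinuousOn (bvInverse r σ μ g) (Ico 0 a) := by
  refine continuousOn_Ico_of_tendsto (fun t ht => ?_) (fun t ht => ?_)
  · obtain ⟨b, htb, hba⟩ := exists_between ht.2
    have hK := integrableOn_bvKernel hg hr (hw b ⟨ht.1.trans htb.le, hba⟩)
    exact (hg.continuousWithinAt.tendsto.div (tendsto_bvWeight_right r σ t) (hw t ht).ne').sub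
      ((tendsto_nhdsWithin_of_tendsto_nhds (tendsto_id.const_mul σ)).mul
        (tendsto_setIntegral_Ioc_right htb hK))
  · have hwt := hw t (Ioo_subset_Ico_self ht)
    have hK := integrableOn_bvKernel hg hr hwt
    have hl : 0 < bvWeightLeft r σ μ t :=
      (lt_min hr hwt).trans_le (min_le_bvWeightLeft r σ le_rfl)
    have := (hg.continuousWithinAt.tendsto.div (tendsto_bvWeight_left (μ := μ) r σ t) hl.ne').sub
      ((tendsto_nhdsWithin_of_tendsto_nhds (tendsto_id.const_mul σ)).mul
        (tendsto_setIntegral_Ioc_left (hK.mono_set Ioo_subset_Ioc_self)))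
    have heq : bvInverse r σ μ g t = g t / bvWeightLeft r σ μ t -
        σ * t * ∫ u in Ioo 0 t, bvKernel r σ μ g u ∂μ := by
      rw [bvInverse, setIntegral_Ioc_eq_Ioo_add ht.1 hK, bvKernel]
      have h3 := bvWeightLeft_eq_add (μ := μ) r σ ht.1
      have h4 : g t / bvWeight r σ μ t - g t / bvWeightLeft r σ μ t =
          σ * t * (μ.real {t} * (g t / (bvWeight r σ μ t * bvWeightLeft r σ μ t))) := by
        rw [div_sub_div _ _ hwt.ne' hl.ne', ← mul_div_assoc, ← mul_div_assoc]
        congr 1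
        rw [h3]
        ring
      linarith
    rw [heq]
    exact this

lemma integrableOn_div_bvWeight {r σ t : ℝ} {g : ℝ → ℝ} (hg : Continuous g) (hr : 0 < r)
    (hw : 0 < bvWeight r σ μ t) :
    IntegrableOn (fun s => g s / bvWeight r σ μ s) (Ioc 0 t) μ := by
  obtain ⟨C, hC⟩ := (isCompact_Icc (a := (0 : ℝ)) (b := t)).exists_bound_of_continuousOn
    hg.continuousOn
  refine IntegrableOn.of_bound (measure_lt_top μ _)
    (hg.measurable.div (measurable_bvWeight r σ)).aestronglyMeasurable
    (C / min r (bvWeight r σ μ t)) ?_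
  filter_upwards [ae_restrict_mem measurableSet_Ioc] with s hs
  have hδ := lt_min hr hw
  have h1 := min_le_bvWeight (μ := μ) r σ hs.2
  have h3 := hC s (Ioc_subset_Icc_self hs)
  rw [norm_div, Real.norm_of_nonneg (hδ.le.trans h1)]
  exact div_le_div₀ ((norm_nonneg _).trans h3) h3 hδ h1

lemma setIntegral_bvInverse {r σ a : ℝ} {g : ℝ → ℝ} (hg : Continuous g) (hr : 0 < r)
    (hw : ∀ t ∈ Ico 0 a, 0 < bvWeight r σ μ t) {t : ℝ} (ht : t ∈ Ico 0 a) :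
    ∫ s in Ioc 0 t, bvInverse r σ μ g s ∂μ =
      bvWeight r σ μ t * ∫ s in Ioc 0 t, bvKernel r σ μ g s ∂μ := by
  have hK := integrableOn_bvKernel hg hr (hw t ht)
  have hf : IntegrableOn (bvInverse r σ μ g) (Ioc 0 t) μ :=
    integrableOn_of_continuousOn_Ico (continuousOn_bvInverse hg hr hw) ht.2
  have hq := integrableOn_div_bvWeight hg hr (hw t ht)
  have hsH : IntegrableOn (fun s => σ * (s * ∫ u in Ioc 0 s, bvKernel r σ μ g u ∂μ))
      (Ioc 0 t) μ := by
    refine (hq.sub hf).congr (Eventually.of_forall fun s => ?_)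
    simp only [Pi.sub_apply, bvInverse]
    ring
  have hkey : ∫ s in Ioc 0 t, σ * (s * ∫ u in Ioc 0 s, bvKernel r σ μ g u ∂μ) ∂μ =
      (∫ s in Ioc 0 t, g s / bvWeight r σ μ s ∂μ) -
        bvWeight r σ μ t * ∫ s in Ioc 0 t, bvKernel r σ μ g s ∂μ := by
    rw [integral_const_mul, setIntegral_mul_setIntegral_Ioc hK, ← integral_const_mul,
      ← integral_const_mul, ← integral_sub hq (hK.const_mul _)]
    refine setIntegral_congr_fun measurableSet_Ioc fun u hu => ?_
    have hwu := (hw u ⟨hu.1.le, hu.2.trans_lt ht.2⟩).ne'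
    have hlu : bvWeightLeft r σ μ u ≠ 0 :=
      ((lt_min hr (hw t ht)).trans_le (min_le_bvWeightLeft r σ hu.2)).ne'
    change σ * (bvKernel r σ μ g u * ∫ s in Icc u t, s ∂μ) = _
    rw [mul_left_comm, mul_setIntegral_Icc_id r σ hu.1 hu.2, bvKernel]
    field_simp
  have hsub : ∫ s in Ioc 0 t, bvInverse r σ μ g s ∂μ = (∫ s in Ioc 0 t,
      g s / bvWeight r σ μ s ∂μ) -
      ∫ s in Ioc 0 t, σ * (s * ∫ u in Ioc 0 s, bvKernel r σ μ g u ∂μ) ∂μ := by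
    rw [← integral_sub hq hsH]
    simp only [bvInverse, mul_assoc]
  rw [hsub, hkey]
  ring

lemma bvTransform_bvInverse {r σ a : ℝ} {g : ℝ → ℝ} (hg : Continuous g) (hr : 0 < r)
    (hw : ∀ t ∈ Ico 0 a, 0 < bvWeight r σ μ t) {t : ℝ} (ht : t ∈ Ico 0 a) :
    bvTransform r σ μ (bvInverse r σ μ g) t = g t := by
  rw [bvTransform, setIntegral_bvInverse hg hr hw ht, bvInverse]
  have := (hw t ht).ne'
  field_simp
  ring

lemma mul_setIntegral_bvKernel_id {r σ a : ℝ} (hr : 0 < r)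
    (hw : ∀ t ∈ Ico 0 a, 0 < bvWeight r σ μ t) {t : ℝ} (ht : t ∈ Ico 0 a) :
    σ * (bvWeight r σ μ t * ∫ s in Ioc 0 t, bvKernel r σ μ (fun s => s) s ∂μ) =
      1 - bvWeight r σ μ t / r := by
  have hg : Continuous fun s : ℝ => r * s := continuous_const.mul continuous_id
  have heq : ∀ s ∈ Ico 0 a, bvInverse r σ μ (fun s => r * s) s = s :=
    eq_of_bvTransform_eq hr hw (continuousOn_bvInverse hg hr hw) continuousOn_id
      fun s hs => by rw [bvTransform_bvInverse hg hr hw hs]; exact (bvTransform_id r σ s).symm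
  have h1 := setIntegral_bvInverse hg hr hw ht
  rw [setIntegral_congr_fun measurableSet_Ioc
    fun s hs => heq s ⟨hs.1.le, hs.2.trans_lt ht.2⟩] at h1
  have h2 : ∫ s in Ioc 0 t, bvKernel r σ μ (fun s => r * s) s ∂μ =
      r * ∫ s in Ioc 0 t, bvKernel r σ μ (fun s => s) s ∂μ := by
    rw [← integral_const_mul]
    simp only [bvKernel, mul_div_assoc]
  rw [h2] at h1
  have h3 : bvWeight r σ μ t = r - σ * ∫ s in Ioc 0 t, s ∂μ := rfl
  field_simp
  linear_combination -σ * h1 + h3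

/-- If the weight vanishes at `a` and `|g|` is small near `a`, so is the primitive of the
inverse transform. -/
lemma tendsto_mul_setIntegral_bvKernel_of_eq_zero {r σ a : ℝ} {g : ℝ → ℝ} (hg : Continuous g)
    (hr : 0 < r) (ha : 0 < a) (hw : ∀ t ∈ Ico 0 a, 0 < bvWeight r σ μ t)
    (hz : bvWeightLeft r σ μ a = 0) (hga : g a = 0) :
    Tendsto (fun t => σ * (bvWeight r σ μ t * ∫ s in Ioc 0 t, bvKernel r σ μ g s ∂μ))
      (𝓝[<] a) (𝓝 0) := by
  have hσ : 0 < σ := by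
    by_contra! hσ
    have : 0 ≤ ∫ u in Ioo 0 a, u ∂μ := setIntegral_nonneg measurableSet_Ioo fun _ h => h.1.le
    unfold bvWeightLeft at hz
    nlinarith
  rw [Metric.tendsto_nhds]
  intro ε hε
  have hsmall : ∀ᶠ s in 𝓝[<] a, |g s| < ε / 2 * s := by
    refine nhdsWithin_le_nhds ?_
    have h1 : Tendsto (fun s => |g s|) (𝓝 a) (𝓝 |g a|) := hg.abs.continuousAt
    have h2 : Tendsto (fun s => ε / 2 * s) (𝓝 a) (𝓝 (ε / 2 * a)) := tendsto_id.const_mul _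
    refine h1.eventually_lt h2 ?_
    rw [hga, abs_zero]
    positivity
  obtain ⟨b, hba, hb⟩ := (mem_nhdsLT_iff_exists_Ioo_subset' ha).1 hsmall
  set b' := max b 0
  have hb'a : b' < a := max_lt hba ha
  have hb'0 : 0 ≤ b' := le_max_right _ _
  set C := ∫ s in Ioc 0 b', |bvKernel r σ μ g s| ∂μ
  have hlim : Tendsto (fun t => σ * (bvWeight r σ μ t * C)) (𝓝[<] a) (𝓝 (σ * (0 * C))) :=
    (((hz ▸ tendsto_bvWeight_left r σ a :
      Tendsto (bvWeight r σ μ) (𝓝[<] a) (𝓝 0))).mul_const C).const_mul σ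
  rw [zero_mul, mul_zero] at hlim
  filter_upwards [hlim.eventually_lt_const (half_pos hε), Ioo_mem_nhdsLT hb'a] with t hC ht
  have htI : t ∈ Ico 0 a := ⟨hb'0.trans ht.1.le, ht.2⟩
  have hwt := hw t htI
  have hK := integrableOn_bvKernel hg hr hwt
  have hKabs : IntegrableOn (fun s => |bvKernel r σ μ g s|) (Ioc 0 t) μ := hK.abs
  have hKid : IntegrableOn (fun s => ε / 2 * bvKernel r σ μ (fun s => s) s) (Ioc 0 t) μ :=
    (integrableOn_bvKernel continuous_id hr hwt).const_mul (ε / 2)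
  have hpos : ∀ s ∈ Ioc 0 t, 0 < bvWeight r σ μ s * bvWeightLeft r σ μ s := fun s hs =>
    mul_pos ((lt_min hr hwt).trans_le (min_le_bvWeight r σ hs.2))
      ((lt_min hr hwt).trans_le (min_le_bvWeightLeft r σ hs.2))
  have hsplit : ∫ s in Ioc 0 t, |bvKernel r σ μ g s| ∂μ =
      C + ∫ s in Ioc b' t, |bvKernel r σ μ g s| ∂μ := by
    rw [← Ioc_union_Ioc_eq_Ioc hb'0 ht.1.le]
    exact setIntegral_union (Ioc_disjoint_Ioc_of_le le_rfl) measurableSet_Ioc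
      (hKabs.mono_set (Ioc_subset_Ioc_right ht.1.le)) (hKabs.mono_set (Ioc_subset_Ioc_left hb'0))
  have htail : ∫ s in Ioc b' t, |bvKernel r σ μ g s| ∂μ ≤
      ε / 2 * ∫ s in Ioc 0 t, bvKernel r σ μ (fun s => s) s ∂μ := by
    rw [← integral_const_mul]
    refine (setIntegral_mono_on (hKabs.mono_set (Ioc_subset_Ioc_left hb'0))
      (hKid.mono_set (Ioc_subset_Ioc_left hb'0)) measurableSet_Ioc
      fun s hs => ?_).trans (setIntegral_mono_set hKid ?_
        (Eventually.of_forall (Ioc_subset_Ioc_left hb'0)))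
    · have hp := hpos s ⟨hb'0.trans_lt hs.1, hs.2⟩
      have hgs : |g s| < ε / 2 * s := hb ⟨(le_max_left _ _).trans_lt hs.1, hs.2.trans_lt ht.2⟩
      rw [bvKernel, bvKernel, abs_div, abs_of_pos hp, ← mul_div_assoc]
      exact div_le_div_of_nonneg_right hgs.le hp.le
    · filter_upwards [ae_restrict_mem measurableSet_Ioc] with s hs
      exact mul_nonneg (half_pos hε).le (div_nonneg hs.1.le (hpos s hs).le)
  have hid := mul_setIntegral_bvKernel_id hr hw htI
  have hle : |∫ s in Ioc 0 t, bvKernel r σ μ g s ∂μ| ≤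
      C + ε / 2 * ∫ s in Ioc 0 t, bvKernel r σ μ (fun s => s) s ∂μ :=
    abs_integral_le_integral_abs.trans (hsplit ▸ add_le_add_right htail C)
  rw [Real.dist_eq, sub_zero, abs_mul, abs_mul, abs_of_pos hσ, abs_of_pos hwt]
  have h1 := mul_le_mul_of_nonneg_left (mul_le_mul_of_nonneg_left hle hwt.le) hσ.le
  have h2 : 0 < bvWeight r σ μ t / r := div_pos hwt hr
  have h3 : ε / 2 * (1 - bvWeight r σ μ t / r) < ε / 2 := by nlinarith
  rw [← hid] at h3
  linarith

lemma exists_tendsto_mul_setIntegral_bvInverse {r σ a : ℝ} {g : ℝ → ℝ} (hg : Continuous g)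
    (hr : 0 < r) (ha : 0 < a) (hw : ∀ t ∈ Ico 0 a, 0 < bvWeight r σ μ t) :
    ∃ L, Tendsto (fun t => σ * ∫ s in Ioc 0 t, bvInverse r σ μ g s ∂μ) (𝓝[<] a) (𝓝 L) := by
  suffices h : ∃ L, Tendsto (fun t => σ * (bvWeight r σ μ t *
      ∫ s in Ioc 0 t, bvKernel r σ μ g s ∂μ)) (𝓝[<] a) (𝓝 L) by
    obtain ⟨L, hL⟩ := h
    refine ⟨L, hL.congr' ?_⟩
    filter_upwards [Ioo_mem_nhdsLT ha] with t ht
    rw [setIntegral_bvInverse hg hr hw (Ioo_subset_Ico_self ht)]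
  have hwl := tendsto_bvWeight_left (μ := μ) r σ a
  have hev : ∀ᶠ t in 𝓝[<] a, t ∈ Ico 0 a := by
    filter_upwards [Ioo_mem_nhdsLT ha] with t ht using Ioo_subset_Ico_self ht
  have hnonneg : 0 ≤ bvWeightLeft r σ μ a :=
    ge_of_tendsto hwl (hev.mono fun t ht => (hw t ht).le)
  rcases hnonneg.eq_or_lt with hz | hpos
  · set c := g a / a
    have hg₀ : Continuous fun s => g s - c * s := hg.sub (continuous_const.mul continuous_id)
    have h₀ := tendsto_mul_setIntegral_bvKernel_of_eq_zero hg₀ hr ha hw hz.symm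
      (by simp only [c]; field_simp; ring)
    have h₁ : Tendsto (fun t => c * (1 - bvWeight r σ μ t / r)) (𝓝[<] a)
        (𝓝 (c * (1 - bvWeightLeft r σ μ a / r))) :=
      ((hwl.div_const r).const_sub 1).const_mul c
    refine ⟨_, (h₀.add h₁).congr' ?_⟩
    filter_upwards [hev] with t ht
    have hsum : ∫ s in Ioc 0 t, bvKernel r σ μ g s ∂μ =
        (∫ s in Ioc 0 t, bvKernel r σ μ (fun s => g s - c * s) s ∂μ) +
          c * ∫ s in Ioc 0 t, bvKernel r σ μ (fun s => s) s ∂μ := by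
      have hKid : IntegrableOn (fun s => c * bvKernel r σ μ (fun s => s) s) (Ioc 0 t) μ :=
        (integrableOn_bvKernel continuous_id hr (hw t ht)).const_mul c
      rw [← integral_const_mul, ← integral_add (integrableOn_bvKernel hg₀ hr (hw t ht)) hKid]
      refine integral_congr_ae (Eventually.of_forall fun s => ?_)
      simp only [bvKernel]
      ring
    rw [hsum, ← mul_setIntegral_bvKernel_id hr hw ht]
    ring
  · have hK : IntegrableOn (bvKernel r σ μ g) (Ioo 0 a) μ :=
      integrableOn_bvKernel_of_le hg (lt_min hr hpos) measurableSet_Ioo Ioo_subset_Icc_self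
        (fun _ hs => min_left_le_bvWeight r σ hs.2)
        (fun _ hs => min_left_le_bvWeightLeft r σ hs.2.le)
    exact ⟨_, (hwl.mul (tendsto_setIntegral_Ioc_left hK)).const_mul σ⟩

/-- The transform on a half-interval is onto. -/
lemma exists_bvTransform_eq {r σ a : ℝ} {g : ℝ → ℝ} (hg : Continuous g)
    (hr : 0 < r) (ha : 0 < a) (hw : ∀ t ∈ Ico 0 a, 0 < bvWeight r σ μ t) :
    ∃ f : ℝ → ℝ, ContinuousOn f (Ico 0 a) ∧ (∀ t ∈ Ico 0 a, bvTransform r σ μ f t = g t) ∧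
      (∃ L, Tendsto (fun t => bvWeight r σ μ t * f t) (𝓝[<] a) (𝓝 L)) ∧
      ∃ L, Tendsto (fun t => σ * ∫ s in Ioc 0 t, f s ∂μ) (𝓝[<] a) (𝓝 L) := by
  obtain ⟨L, hL⟩ := exists_tendsto_mul_setIntegral_bvInverse hg hr ha hw
  refine ⟨bvInverse r σ μ g, continuousOn_bvInverse hg hr hw,
    fun t ht => bvTransform_bvInverse hg hr hw ht, ⟨g a - a * L, ?_⟩, L, hL⟩
  refine ((hg.continuousWithinAt.tendsto).sub
    ((tendsto_nhdsWithin_of_tendsto_nhds tendsto_id).mul hL)).congr' ?_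
  filter_upwards [Ioo_mem_nhdsLT ha] with t ht
  have := bvTransform_bvInverse hg hr hw (Ioo_subset_Ico_self ht)
  rw [bvTransform] at this
  simp only [id]
  linarith

end HalfInterval

lemma setIntegral_Ioc_map_neg (μ : Measure ℝ) (f : ℝ → ℝ) (t : ℝ) :
    ∫ s in Ioc 0 t, f (-s) ∂μ.map Neg.neg = ∫ s in Ico (-t) 0, f s ∂μ := by
  rw [(MeasurableEquiv.neg ℝ).measurableEmbedding.setIntegral_map (f := Neg.neg)]
  simp

lemma continuousOn_Ioo_of_Ico_neg {h : ℝ → ℝ} {am ap : ℝ}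
    (hp : ContinuousOn h (Ico 0 ap)) (hm : ContinuousOn (fun s => h (-s)) (Ico 0 (-am))) :
    ContinuousOn h (Ioo am ap) := by
  have hm' : ContinuousOn h (Ioc am 0) := by
    have := hm.comp (s := Ioc am 0) continuousOn_neg
      fun s hs => ⟨neg_nonneg.2 hs.2, neg_lt_neg hs.1⟩
    simpa [Function.comp_def] using this
  intro t ht
  rcases lt_trichotomy t 0 with h0 | rfl | h0
  · exact ((hm' t ⟨ht.1, h0.le⟩).continuousAt (Ioc_mem_nhds ht.1 h0)).continuousWithinAt
  · refine ((hm' 0 ⟨ht.1, le_rfl⟩).union (hp 0 ⟨le_rfl, ht.2⟩)).mono fun s hs => ?_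
    exact (le_total s 0).imp (fun h => ⟨hs.1, h⟩) fun h => ⟨h, hs.2⟩
  · exact ((hp t ⟨h0.le, ht.2⟩).continuousAt (Ico_mem_nhds h0 ht.2)).continuousWithinAt

namespace NormBV0

variable {P : NormBV0} {μ : Measure ℝ} {σ am ap : ℝ}

lemma BVplusOn.exists_integ_eq (h : P.BVplusOn am ap) :
    ∃ (μ : Measure ℝ) (σ : ℝ), IsFiniteMeasure μ ∧
      ∀ S f, P.integ S f = σ * ∫ s in S, f s ∂μ := by
  obtain ⟨hp, hm, -, h0 | h0⟩ := h
  · refine ⟨P.νp, 1, ⟨?_⟩, fun S f => by simp [integ, h0]⟩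
    rw [← measure_add_measure_compl (measurableSet_Ioo (a := (-1 : ℝ)) (b := 1)), P.supp_p,
      add_zero]
    exact hp.lt_top
  · refine ⟨P.νm, -1, ⟨?_⟩, fun S f => by simp [integ, h0]⟩
    rw [← measure_add_measure_compl (measurableSet_Ioo (a := (-1 : ℝ)) (b := 1)), P.supp_m,
      add_zero]
    exact hm.lt_top

lemma R_eq_bvWeight (hμ : ∀ S f, P.integ S f = σ * ∫ s in S, f s ∂μ) {t : ℝ}
    (ht : t ∈ Ico (0 : ℝ) 1) : P.R t = bvWeight (P.R 0) σ μ t := by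
  rw [bvWeight, ← hμ]
  exact P.fund_pos t ht

lemma integ_Ico_neg (hμ : ∀ S f, P.integ S f = σ * ∫ s in S, f s ∂μ) (f : ℝ → ℝ) (t : ℝ) :
    P.integ (Ico (-t) 0) f = σ * ∫ s in Ioc 0 t, f (-s) ∂μ.map Neg.neg := by
  rw [hμ, setIntegral_Ioc_map_neg]

lemma R_neg_eq_bvWeight (hμ : ∀ S f, P.integ S f = σ * ∫ s in S, f s ∂μ) {t : ℝ}
    (ht : t ∈ Ico (0 : ℝ) 1) : P.R (-t) = bvWeight (P.R 0) σ (μ.map Neg.neg) t := by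
  have h1 : P.R (-t) = P.R 0 + P.integ (Ico (-t) 0) fun s => s :=
    P.fund_neg (-t) ⟨neg_lt_neg ht.2, neg_nonpos.2 ht.1⟩
  rw [h1, integ_Ico_neg hμ, integral_neg, bvWeight]
  ring

lemma T_eq_bvTransform (hμ : ∀ S f, P.integ S f = σ * ∫ s in S, f s ∂μ) (f : ℝ → ℝ) {t : ℝ}
    (ht : t ∈ Ico (0 : ℝ) 1) : P.T f t = bvTransform (P.R 0) σ μ f t := by
  rcases ht.1.eq_or_lt with h0 | h0
  · simp [← h0, T]
  · rw [T, if_pos h0, bvTransform, R_eq_bvWeight hμ ht, hμ]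

lemma T_neg_eq_bvTransform (hμ : ∀ S f, P.integ S f = σ * ∫ s in S, f s ∂μ) (f : ℝ → ℝ) {t : ℝ}
    (ht : t ∈ Ico (0 : ℝ) 1) :
    P.T f (-t) = bvTransform (P.R 0) σ (μ.map Neg.neg) (fun s => f (-s)) t := by
  rw [T, if_neg (by linarith [ht.1]), bvTransform, R_neg_eq_bvWeight hμ ht, integ_Ico_neg hμ]
  ring

lemma continuousOn_T [IsFiniteMeasure μ] (hμ : ∀ S f, P.integ S f = σ * ∫ s in S, f s ∂μ)
    (h1 : -1 ≤ am) (h4 : ap ≤ 1) (h2 : am < 0) (h3 : 0 < ap) {f : ℝ → ℝ}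
    (hf : ContinuousOn f (Ioo am ap)) : ContinuousOn (P.T f) (Ioo am ap) := by
  refine continuousOn_Ioo_of_Ico_neg ?_ ?_
  · refine (continuousOn_bvTransform (P.R 0) σ (μ := μ) (hf.mono fun s hs =>
      ⟨h2.trans_le hs.1, hs.2⟩)).congr fun t ht => ?_
    exact T_eq_bvTransform hμ f ⟨ht.1, ht.2.trans_le h4⟩
  · refine (continuousOn_bvTransform (P.R 0) σ (μ := μ.map Neg.neg) (f := fun s => f (-s))
      (hf.comp continuousOn_neg fun s hs => ⟨by linarith [hs.2], by linarith [hs.1]⟩)).congr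
      fun t ht => ?_
    exact T_neg_eq_bvTransform hμ f ⟨ht.1, by linarith [ht.2]⟩

end NormBV0

lemma exists_continuous_extension_Icc {h : ℝ → ℝ} {a b : ℝ} (hab : a ≤ b)
    (hc : ContinuousOn h (Icc a b)) :
    ∃ e : ℝ → ℝ, Continuous e ∧ (∀ t ∈ Icc a b, e t = h t) ∧ (∀ t ≤ a, e t = h a) ∧
      ∀ t, b ≤ t → e t = h b :=
  ⟨IccExtend hab ((Icc a b).domRestrict h), hc.domRestrict.Icc_extend',
    fun _ ht => IccExtend_of_mem hab _ ht, fun _ ht => IccExtend_of_le_left hab _ ht,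
    fun _ ht => IccExtend_of_right_le hab _ ht⟩

/-- Linear extension to the real line of a continuous function on an interval around `0`. -/
lemma exists_linear_extension {h : ℝ → ℝ} {am ap Lm Lp : ℝ} (h2 : am < 0) (h3 : 0 < ap)
    (hc : ContinuousOn h (Ioo am ap)) (hp : Tendsto h (𝓝[<] ap) (𝓝 Lp))
    (hm : Tendsto h (𝓝[>] am) (𝓝 Lm)) :
    ∃ g : ℝ → ℝ, Continuous g ∧ (∀ t ∈ Ioo am ap, g t = h t) ∧
      (∀ t, ap ≤ t → g t = g ap / ap * t) ∧ ∀ t ≤ am, g t = g am / am * t := by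
  obtain ⟨e, he, heI, hem, hep⟩ := exists_continuous_extension_Icc (h2.trans h3).le
    (continuousOn_Icc_extendFrom_Ioo hc hm hp)
  generalize extendFrom (Ioo am ap) h am = M at hem
  generalize extendFrom (Ioo am ap) h ap = Q at hep
  obtain ⟨g, hg⟩ : ∃ g : ℝ → ℝ, ∀ t, g t =
    e t + Q / ap * max (t - ap) 0 + M / am * min (t - am) 0 := ⟨_, fun _ => rfl⟩
  have hgc : Continuous g := by
    rw [funext hg]
    fun_prop
  have hgp : ∀ t, ap ≤ t → g t = Q / ap * t := fun t ht => by
    rw [hg, hep t ht, max_eq_left (sub_nonneg.2 ht), min_eq_right (by linarith)]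
    field_simp
    ring
  have hgm : ∀ t ≤ am, g t = M / am * t := fun t ht => by
    rw [hg, hem t ht, max_eq_right (by linarith), min_eq_left (sub_nonpos.2 ht)]
    have := h2.ne
    field_simp
    ring
  refine ⟨g, hgc, fun t ht => ?_, fun t ht => ?_, fun t ht => ?_⟩
  · rw [hg, heI t (Ioo_subset_Icc_self ht), extendFrom_extends hc t ht,
      max_eq_right (by linarith [ht.2]), min_eq_right (by linarith [ht.1])]
    ring
  · rw [hgp t ht, hgp ap le_rfl, div_mul_cancel₀ _ h3.ne']
  · rw [hgm t ht, hgm am le_rfl, div_mul_cancel₀ _ h2.ne]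

/-- The perturbed transform `f ↦ T_{R,ν}f + c·f(0)·|·|`, extended
linearly outside `I = (a₋,a₊)`, is a bijection from `D^I_{R,ν}` onto the continuous
functions on `[-1,1]` that are linear through the origin on `[a₊,1]` and `[-1,a₋]`. -/
theorem bv0_perturbed_bijection_subinterval (P : NormBV0) (am ap : ℝ)
    (h1 : -1 ≤ am) (h2 : am < 0) (h3 : 0 < ap) (h4 : ap ≤ 1)
    (hBV : P.BVplusOn am ap) (c : ℝ) :
    (∀ f : ℝ → ℝ, P.memDI am ap f →
      ∃ g : ℝ → ℝ, ContinuousOn g (Set.Icc (-1 : ℝ) 1) ∧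
        (∀ t ∈ Set.Ioo am ap, g t = P.T f t + c * f 0 * |t|) ∧
        (∀ t ∈ Set.Icc ap 1, g t = g ap / ap * t) ∧
        (∀ t ∈ Set.Icc (-1 : ℝ) am, g t = g am / am * t)) ∧
    (∀ f₁ f₂ : ℝ → ℝ, P.memDI am ap f₁ → P.memDI am ap f₂ →
      (∀ t ∈ Set.Ioo am ap, P.T f₁ t + c * f₁ 0 * |t| = P.T f₂ t + c * f₂ 0 * |t|) →
      ∀ t ∈ Set.Ioo am ap, f₁ t = f₂ t) ∧
    (∀ g : ℝ → ℝ, ContinuousOn g (Set.Icc (-1 : ℝ) 1) →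
      (∀ t ∈ Set.Icc ap 1, g t = g ap / ap * t) →
      (∀ t ∈ Set.Icc (-1 : ℝ) am, g t = g am / am * t) →
      ∃ f : ℝ → ℝ, P.memDI am ap f ∧
        ∀ t ∈ Set.Ioo am ap, P.T f t + c * f 0 * |t| = g t) := by
  obtain ⟨μ, σ, hfin, hμ⟩ := hBV.exists_integ_eq
  have hfin' : IsFiniteMeasure (μ.map Neg.neg) := inferInstance
  have hR : ∀ t ∈ Ioo am ap, 0 < P.R t := hBV.2.2.1
  have hr : 0 < P.R 0 := hR 0 ⟨h2, h3⟩
  have h2' : 0 < -am := neg_pos.2 h2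
  have hIp : ∀ t ∈ Ico 0 ap, t ∈ Ico (0 : ℝ) 1 := fun t ht => ⟨ht.1, ht.2.trans_le h4⟩
  have hIm : ∀ t ∈ Ico 0 (-am), t ∈ Ico (0 : ℝ) 1 := fun t ht => ⟨ht.1, by linarith [ht.2]⟩
  have hIp' : ∀ t ∈ Ico 0 ap, t ∈ Ioo am ap := fun t ht => ⟨h2.trans_le ht.1, ht.2⟩
  have hIm' : ∀ t ∈ Ico 0 (-am), -t ∈ Ioo am ap := fun t ht =>
    ⟨by linarith [ht.2], by linarith [ht.1]⟩
  have hwp : ∀ t ∈ Ico 0 ap, 0 < bvWeight (P.R 0) σ μ t := fun t ht => by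
    rw [← P.R_eq_bvWeight hμ (hIp t ht)]
    exact hR t (hIp' t ht)
  have hwm : ∀ t ∈ Ico 0 (-am), 0 < bvWeight (P.R 0) σ (μ.map Neg.neg) t := fun t ht => by
    rw [← P.R_neg_eq_bvWeight hμ (hIm t ht)]
    exact hR (-t) (hIm' t ht)
  have hT0 : ∀ f, P.T f 0 = P.R 0 * f 0 := fun f => by simp [NormBV0.T]
  refine ⟨?_, ?_, ?_⟩
  · rintro f ⟨hf, ⟨A, hA⟩, ⟨B, hB⟩, ⟨C, hC⟩, ⟨D, hD⟩⟩
    have hcabs : Continuous fun t : ℝ => c * f 0 * |t| := continuous_const.mul continuous_abs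
    have hp : Tendsto (fun t => P.T f t + c * f 0 * |t|) (𝓝[<] ap)
        (𝓝 (A + ap * C + c * f 0 * |ap|)) := by
      refine Tendsto.add ?_ hcabs.continuousWithinAt.tendsto
      refine (hA.add ((tendsto_nhdsWithin_of_tendsto_nhds tendsto_id).mul hC)).congr' ?_
      filter_upwards [Ioo_mem_nhdsLT h3] with t ht
      rw [NormBV0.T, if_pos ht.1, id]
    have hm : Tendsto (fun t => P.T f t + c * f 0 * |t|) (𝓝[>] am)
        (𝓝 (B - am * D + c * f 0 * |am|)) := by
      refine Tendsto.add ?_ hcabs.continuousWithinAt.tendsto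
      refine (hB.sub ((tendsto_nhdsWithin_of_tendsto_nhds tendsto_id).mul hD)).congr' ?_
      filter_upwards [Ioo_mem_nhdsGT h2] with t ht
      rw [NormBV0.T, if_neg ht.2.not_gt, id]
    obtain ⟨g, hg, hgI, hgp, hgm⟩ := exists_linear_extension h2 h3
      ((P.continuousOn_T hμ h1 h4 h2 h3 hf).add hcabs.continuousOn) hp hm
    exact ⟨g, hg.continuousOn, hgI, fun t ht => hgp t ht.1, fun t ht => hgm t ht.2⟩
  · intro f₁ f₂ hf₁ hf₂ h
    have h0 : f₁ 0 = f₂ 0 := by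
      have := h 0 ⟨h2, h3⟩
      simp only [hT0, abs_zero, mul_zero, add_zero] at this
      exact mul_left_cancel₀ hr.ne' this
    have hT : ∀ t ∈ Ioo am ap, P.T f₁ t = P.T f₂ t := fun t ht => by
      have := h t ht
      rw [h0] at this
      exact add_right_cancel this
    have hpos := eq_of_bvTransform_eq hr hwp (hf₁.1.mono hIp') (hf₂.1.mono hIp') fun t ht => by
      rw [← P.T_eq_bvTransform hμ f₁ (hIp t ht), ← P.T_eq_bvTransform hμ f₂ (hIp t ht)]
      exact hT t (hIp' t ht)
    have hneg := eq_of_bvTransform_eq (f₁ := fun s => f₁ (-s)) (f₂ := fun s => f₂ (-s)) hr hwm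
      (hf₁.1.comp continuousOn_neg hIm') (hf₂.1.comp continuousOn_neg hIm') fun t ht => by
        rw [← P.T_neg_eq_bvTransform hμ f₁ (hIm t ht), ← P.T_neg_eq_bvTransform hμ f₂ (hIm t ht)]
        exact hT (-t) (hIm' t ht)
    intro t ht
    rcases le_total 0 t with h0 | h0
    · exact hpos t ⟨h0, ht.2⟩
    · simpa using hneg (-t) ⟨neg_nonneg.2 h0, neg_lt_neg ht.1⟩
  · intro g hg _ _
    obtain ⟨e, he, heI, -, -⟩ := exists_continuous_extension_Icc (by norm_num) hg
    obtain ⟨G, hG⟩ : ∃ G : ℝ → ℝ, ∀ t, G t = e t - c * (g 0 / P.R 0) * |t| :=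
      ⟨_, fun _ => rfl⟩
    have hGc : Continuous G := by
      rw [funext hG]
      fun_prop
    have hGeq : ∀ t ∈ Ioo am ap, G t = g t - c * (g 0 / P.R 0) * |t| := fun t ht => by
      rw [hG, heI t ⟨h1.trans ht.1.le, ht.2.le.trans h4⟩]
    have hG0 : G 0 = g 0 := by rw [hGeq 0 ⟨h2, h3⟩, abs_zero, mul_zero, sub_zero]
    obtain ⟨fp, hfp, hTp, ⟨A, hA⟩, ⟨C, hC⟩⟩ := exists_bvTransform_eq hGc hr h3 hwp
    obtain ⟨fm, hfm, hTm, ⟨B, hB⟩, ⟨D, hD⟩⟩ :=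
      exists_bvTransform_eq (hGc.comp continuous_neg) hr h2' hwm
    have hfp0 : P.R 0 * fp 0 = g 0 := by
      rw [← hG0, ← hTp 0 ⟨le_rfl, h3⟩, bvTransform_zero]
    have hfm0 : P.R 0 * fm 0 = g 0 := by
      have := hTm 0 ⟨le_rfl, h2'⟩
      rwa [bvTransform_zero, Function.comp_apply, neg_zero, hG0] at this
    have h00 : fm 0 = fp 0 := mul_left_cancel₀ hr.ne' (hfm0.trans hfp0.symm)
    set f : ℝ → ℝ := fun t => if 0 ≤ t then fp t else fm (-t) with hf
    have hfpos : ∀ t, 0 ≤ t → f t = fp t := fun t ht => if_pos ht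
    have hfneg : ∀ t, 0 ≤ t → f (-t) = fm t := fun t ht => by
      rcases ht.eq_or_lt with h0 | h0
      · rw [← h0, neg_zero, hfpos 0 le_rfl, h00]
      · simp [hf, h0.not_ge]
    have hintp : ∀ t, ∫ s in Ioc 0 t, f s ∂μ = ∫ s in Ioc 0 t, fp s ∂μ := fun t =>
      setIntegral_congr_fun measurableSet_Ioc fun s hs => hfpos s hs.1.le
    have hintm : ∀ t, ∫ s in Ioc 0 t, f (-s) ∂μ.map Neg.neg =
        ∫ s in Ioc 0 t, fm s ∂μ.map Neg.neg := fun t =>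
      setIntegral_congr_fun measurableSet_Ioc fun s hs => hfneg s hs.1.le
    have hlim : ∀ {F k : ℝ → ℝ} {L : ℝ}, Tendsto k (𝓝[<] (-am)) (𝓝 L) →
        (∀ t ∈ Ioo 0 (-am), k t = F (-t)) → Tendsto F (𝓝[>] am) (𝓝 L) := by
      intro F k L hk hkF
      refine (hk.comp (tendsto_neg_nhdsGT (a := am))).congr' ?_
      filter_upwards [Ioo_mem_nhdsGT h2] with t ht
      rw [Function.comp_apply, hkF _ ⟨neg_pos.2 ht.2, neg_lt_neg ht.1⟩, neg_neg]
    refine ⟨f, ⟨?_, ⟨A, ?_⟩, ⟨B, ?_⟩, ⟨C, ?_⟩, ⟨D, ?_⟩⟩, ?_⟩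
    · exact continuousOn_Ioo_of_Ico_neg (hfp.congr fun t ht => hfpos t ht.1)
        (hfm.congr fun t ht => hfneg t ht.1)
    · refine hA.congr' ?_
      filter_upwards [Ioo_mem_nhdsLT h3] with t ht
      rw [hfpos t ht.1.le, P.R_eq_bvWeight hμ (hIp t (Ioo_subset_Ico_self ht))]
    · refine hlim hB fun t ht => ?_
      rw [hfneg t ht.1.le, P.R_neg_eq_bvWeight hμ (hIm t (Ioo_subset_Ico_self ht))]
    · refine hC.congr fun t => ?_
      rw [hμ, hintp]
    · refine hlim hD fun t _ => ?_
      rw [P.integ_Ico_neg hμ, hintm]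
    · have hf0 : f 0 = g 0 / P.R 0 := by
        rw [hfpos 0 le_rfl, eq_div_iff hr.ne', mul_comm, hfp0]
      have hTG : ∀ t ∈ Ioo am ap, P.T f t = G t := by
        intro t ht
        rcases le_total 0 t with h0 | h0
        · have htI : t ∈ Ico 0 ap := ⟨h0, ht.2⟩
          rw [P.T_eq_bvTransform hμ f (hIp t htI), ← hTp t htI, bvTransform, bvTransform, hintp,
            hfpos t h0]
        · obtain ⟨s, rfl⟩ : ∃ s, t = -s := ⟨-t, (neg_neg t).symm⟩
          have hs0 : 0 ≤ s := neg_nonpos.1 h0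
          have hsI : s ∈ Ico 0 (-am) := ⟨hs0, by linarith [ht.1]⟩
          have := hTm s hsI
          rw [Function.comp_apply] at this
          rw [P.T_neg_eq_bvTransform hμ f (hIm s hsI), ← this, bvTransform, bvTransform, hintm,
            hfneg s hs0]
      intro t ht
      rw [hTG t ht, hGeq t ht, hf0]
      ring
end

section
/- Let C ⊆ ℝⁿ be a body of revolution, let t ∈ (−1,1), let ū be a unit vector orthogonal to e_n, and set u_t = t·e_n + √(1−t²)·ū. Then the one-sided limits ∂₊h̄_C(t) = lim_{t′→t⁺} (h̄_C(t′) − h̄_C(t))/(t′ − t) and ∂₋h̄_C(t) = lim_{t′→t⁻} (h̄_C(t′) − h̄_C(t))/(t′ − t) exist, and they satisfy ∂₊h̄_C(t) = h_{F(C,u_t)}(e_n − (t/√(1−t²))·ū) and ∂₋h̄_C(t) = −h_{F(C,u_t)}(−e_n + (t/√(1−t²))·ū). -/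
open Set Filter Topology Function
open scoped RealInnerProductSpace Pointwise

/-- Euclidean space `ℝ^(n+1)`. -/
abbrev Euc (n : ℕ) := EuclideanSpace ℝ (Fin (n + 1))

/-- The last standard basis vector `e_n`. -/
noncomputable def eAx (n : ℕ) : Euc n := EuclideanSpace.single (Fin.last n) (1 : ℝ)

/-- Support function of a set `K`. -/
noncomputable def suppFn {n : ℕ} (K : Set (Euc n)) (u : Euc n) : ℝ :=
  sSup ((fun x => ⟪x, u⟫) '' K)

/-- The face of `K` in direction `u`. -/
def face {n : ℕ} (K : Set (Euc n)) (u : Euc n) : Set (Euc n) :=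
  {x ∈ K | ⟪x, u⟫ = suppFn K u}

/-- `C` is a body of revolution with axis `e_n`: it is invariant under every linear
isometry fixing `e_n`. -/
def IsRevBody {n : ℕ} (C : Set (Euc n)) : Prop :=
  C.Nonempty ∧ IsCompact C ∧ Convex ℝ C ∧
    ∀ ρ : Euc n ≃ₗᵢ[ℝ] Euc n, ρ (eAx n) = eAx n → ρ '' C = C

/-- The restricted support function `h̄_C(t) = h_C(t·e_n + √(1-t²)·ū)`. -/
noncomputable def hbar {n : ℕ} (C : Set (Euc n)) (ub : Euc n) (t : ℝ) : ℝ :=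
  suppFn C (t • eAx n + Real.sqrt (1 - t ^ 2) • ub)

lemma IsCompact.exists_inner_eq_suppFn {n : ℕ} {K : Set (Euc n)} (hK : IsCompact K)
    (hne : K.Nonempty) (u : Euc n) :
    ∃ x ∈ K, ⟪x, u⟫ = suppFn K u ∧ ∀ y ∈ K, ⟪y, u⟫ ≤ ⟪x, u⟫ := by
  have hc : ContinuousOn (fun x : Euc n => ⟪x, u⟫) K := by fun_prop
  obtain ⟨x, hx, hsup, hmax⟩ := hK.exists_sSup_image_eq_and_ge hne hc
  exact ⟨x, hx, hsup.symm, hmax⟩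

lemma IsCompact.inner_le_suppFn {n : ℕ} {K : Set (Euc n)} (hK : IsCompact K)
    {x : Euc n} (hx : x ∈ K) (u : Euc n) : ⟪x, u⟫ ≤ suppFn K u := by
  obtain ⟨y, -, hy, hmax⟩ := hK.exists_inner_eq_suppFn ⟨x, hx⟩ u
  exact hy ▸ hmax x hx

lemma IsCompact.face {n : ℕ} {K : Set (Euc n)} (hK : IsCompact K) (u : Euc n) :
    IsCompact (face K u) :=
  hK.inter_right (isClosed_eq (f := fun x : Euc n => ⟪x, u⟫) (by fun_prop) continuous_const)

/-- Directional derivative of a support function along directions `q i` converging to `v`,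
with positive step sizes `s i` converging to zero. -/
lemma tendsto_suppFn_div {n : ℕ} {ι : Type*} {l : Filter ι} {K : Set (Euc n)}
    (hK : IsCompact K) (hne : K.Nonempty) (u v : Euc n) {s : ι → ℝ} {q : ι → Euc n}
    (hs : Tendsto s l (𝓝 0)) (hpos : ∀ᶠ i in l, 0 < s i) (hq : Tendsto q l (𝓝 v)) :
    Tendsto (fun i => (suppFn K (u + s i • q i) - suppFn K u) / s i) l
      (𝓝 (suppFn (face K u) v)) := by
  rw [tendsto_iff_ultrafilter]
  intro U hU
  replace hs := hs.mono_left hU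
  replace hq := hq.mono_left hU
  replace hpos := hpos.filter_mono hU
  choose x hxK hx hxmax using fun i => hK.exists_inner_eq_suppFn hne (u + s i • q i)
  obtain ⟨x₀, hx₀K, hx₀⟩ := hK.ultrafilter_le_nhds (U.map x)
    (tendsto_principal.2 (Eventually.of_forall hxK))
  replace hx₀ : Tendsto x U (𝓝 x₀) := hx₀
  have hw : Tendsto (fun i => u + s i • q i) U (𝓝 u) := by
    simpa using tendsto_const_nhds.add (hs.smul hq)
  obtain ⟨z, hzK, hz, -⟩ := hK.exists_inner_eq_suppFn hne u
  have hx₀F : x₀ ∈ face K u := by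
    refine ⟨hx₀K, le_antisymm (hK.inner_le_suppFn hx₀K u) ?_⟩
    rw [← hz]
    exact le_of_tendsto_of_tendsto' (tendsto_const_nhds.inner hw) (hx₀.inner hw)
      fun i => hxmax i z hzK
  have hF := hK.face u
  obtain ⟨y, hyF, hy, -⟩ := hF.exists_inner_eq_suppFn ⟨x₀, hx₀F⟩ v
  have hlower : ∀ᶠ i in (U : Filter ι),
      ⟪y, q i⟫ ≤ (suppFn K (u + s i • q i) - suppFn K u) / s i := by
    filter_upwards [hpos] with i hi
    have h := hK.inner_le_suppFn hyF.1 (u + s i • q i)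
    rw [inner_add_right, real_inner_smul_right, hyF.2] at h
    rw [le_div_iff₀ hi]
    linarith
  have hupper : ∀ᶠ i in (U : Filter ι),
      (suppFn K (u + s i • q i) - suppFn K u) / s i ≤ ⟪x i, q i⟫ := by
    filter_upwards [hpos] with i hi
    have h := hK.inner_le_suppFn (hxK i) u
    rw [div_le_iff₀ hi, ← hx i, inner_add_right, real_inner_smul_right]
    linarith
  have hyq : Tendsto (fun i => ⟪y, q i⟫) U (𝓝 (suppFn (face K u) v)) :=
    hy ▸ tendsto_const_nhds.inner hq
  have hxq : Tendsto (fun i => ⟪x i, q i⟫) U (𝓝 ⟪x₀, v⟫) := hx₀.inner hq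
  have heq : ⟪x₀, v⟫ = suppFn (face K u) v :=
    le_antisymm (hF.inner_le_suppFn hx₀F v)
      (le_of_tendsto_of_tendsto hyq hxq
        (by filter_upwards [hlower, hupper] with i h₁ h₂ using h₁.trans h₂))
  exact tendsto_of_tendsto_of_tendsto_of_le_of_le' hyq (heq ▸ hxq) hlower hupper

/-- One-sided derivatives of a support function along a differentiable curve. -/
lemma HasDerivAt.tendsto_suppFn {n : ℕ} {K : Set (Euc n)} (hK : IsCompact K)
    (hne : K.Nonempty) {γ : ℝ → Euc n} {v : Euc n} {t : ℝ} (hγ : HasDerivAt γ v t) :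
    Tendsto (fun r => (suppFn K (γ r) - suppFn K (γ t)) / (r - t)) (𝓝[>] t)
      (𝓝 (suppFn (face K (γ t)) v)) ∧
    Tendsto (fun r => (suppFn K (γ r) - suppFn K (γ t)) / (r - t)) (𝓝[<] t)
      (𝓝 (-suppFn (face K (γ t)) (-v))) := by
  have hslope := hasDerivAt_iff_tendsto_slope.1 hγ
  have hsub : Tendsto (fun r => r - t) (𝓝 t) (𝓝 0) :=
    (continuous_sub_right t).tendsto' t 0 (sub_self t)
  constructor
  · refine (tendsto_suppFn_div (s := fun r => r - t) (q := slope γ t) hK hne (γ t) v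
      (hsub.mono_left nhdsWithin_le_nhds) ?_
      (hslope.mono_left (nhdsWithin_mono t fun r hr => ne_of_gt hr))).congr fun r => ?_
    · filter_upwards [self_mem_nhdsWithin] with r hr using sub_pos.2 hr
    · rw [sub_smul_slope, vsub_eq_sub, add_sub_cancel]
  · refine (tendsto_suppFn_div (s := fun r => -(r - t)) (q := fun r => -slope γ t r)
      hK hne (γ t) (-v) (by simpa using (hsub.mono_left nhdsWithin_le_nhds).neg) ?_
      (hslope.mono_left (nhdsWithin_mono t fun r hr => ne_of_lt hr)).neg).neg.congr
      fun r => ?_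
    · filter_upwards [self_mem_nhdsWithin] with r hr using neg_pos.2 (sub_neg.2 hr)
    · rw [neg_smul_neg, sub_smul_slope, vsub_eq_sub, add_sub_cancel, div_neg, neg_neg]

lemma hasDerivAt_smul_add_sqrt_smul {E : Type*} [NormedAddCommGroup E] [NormedSpace ℝ E]
    (a b : E) {t : ℝ} (ht : t ∈ Set.Ioo (-1 : ℝ) 1) :
    HasDerivAt (fun r : ℝ => r • a + Real.sqrt (1 - r ^ 2) • b)
      (a - (t / Real.sqrt (1 - t ^ 2)) • b) t := by
  have hpos : 0 < 1 - t ^ 2 := by nlinarith [ht.1, ht.2]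
  have hsqrt := (((hasDerivAt_id t).pow 2).const_sub 1).sqrt hpos.ne'
  refine (((hasDerivAt_id t).smul_const a).add (hsqrt.smul_const b)).congr_deriv ?_
  rw [one_smul, sub_eq_add_neg a, ← neg_smul]
  congr 2
  simp only [Pi.pow_apply, id]
  field_simp
  norm_num

/-- For a body of revolution `C` and `t ∈ (-1,1)`, the one-sided
derivatives of `h̄_C` at `t` exist and satisfy
`∂₊h̄_C(t) = h_{F(C,u_t)}(e_n - (t/√(1-t²))·ū)` and
`∂₋h̄_C(t) = -h_{F(C,u_t)}(-e_n + (t/√(1-t²))·ū)`. -/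
theorem revBody_one_sided_derivatives {n : ℕ} (hn : 1 ≤ n) (C : Set (Euc n))
    (hC : IsRevBody C) (t : ℝ) (ht : t ∈ Set.Ioo (-1 : ℝ) 1)
    (ub : Euc n) (hub : ‖ub‖ = 1) (horth : ⟪eAx n, ub⟫ = 0) :
    Tendsto (fun t' => (hbar C ub t' - hbar C ub t) / (t' - t)) (𝓝[>] t)
      (𝓝 (suppFn (face C (t • eAx n + Real.sqrt (1 - t ^ 2) • ub))
        (eAx n - (t / Real.sqrt (1 - t ^ 2)) • ub))) ∧
    Tendsto (fun t' => (hbar C ub t' - hbar C ub t) / (t' - t)) (𝓝[<] t)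
      (𝓝 (-suppFn (face C (t • eAx n + Real.sqrt (1 - t ^ 2) • ub))
        (-eAx n + (t / Real.sqrt (1 - t ^ 2)) • ub))) := by
  have h := (hasDerivAt_smul_add_sqrt_smul (eAx n) ub ht).tendsto_suppFn hC.2.1 hC.1
  rwa [neg_sub, sub_eq_neg_add _ (eAx n)] at h
end

section
/- Let C ⊆ ℝⁿ be a body of revolution and let u be a unit vector with t = ⟨e_n,u⟩ ∈ (−1,1). Then there exists x ∈ F(C,u) such that C ∩ {y ∈ ℝⁿ : ⟨e_n,y⟩ = ⟨e_n,x⟩} = {⟨e_n,x⟩·e_n + w : w ∈ ℝⁿ, ⟨e_n,w⟩ = 0, ‖w‖ ≤ R_C(t)}. Moreover, the limits r₊ = lim_{t→1⁻} R_C(t) and r₋ = lim_{t→−1⁺} R_C(t) exist, and F(C, e_n) = {h̄_C(1)·e_n + w : w ∈ ℝⁿ, ⟨e_n,w⟩ = 0, ‖w‖ ≤ r₊} and F(C, −e_n) = {−h̄_C(−1)·e_n + w : w ∈ ℝⁿ, ⟨e_n,w⟩ = 0, ‖w‖ ≤ r₋}. -/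
open Set Filter Topology Function
open scoped RealInnerProductSpace Pointwise

/-- The right derivative `∂₊h̄_C(t)` (as a limit along `𝓝[>] t`; it exists for bodies of
revolution). -/
noncomputable def rightDeriv (h : ℝ → ℝ) (t : ℝ) : ℝ :=
  limUnder (𝓝[>] t) fun s => (h s - h t) / (s - t)

/-- The profile function `R_C(t) = √(1-t²)·(h̄_C(t) - t·∂₊h̄_C(t))`. -/
noncomputable def RC {n : ℕ} (C : Set (Euc n)) (ub : Euc n) (t : ℝ) : ℝ :=
  Real.sqrt (1 - t ^ 2) * (hbar C ub t - t * rightDeriv (hbar C ub) t)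

/-- The projection of `C` to the plane spanned by `e_n` and `ub`, in coordinates. -/
def profile {n : ℕ} (C : Set (Euc n)) (ub : Euc n) : Set (ℝ × ℝ) :=
  (fun x => (⟪eAx n, x⟫, ⟪ub, x⟫)) '' C

/-- The point `q` of `P` maximizes the linear functional with coefficients `a`, `b` on `P`. -/
def IsSupportPt (P : Set (ℝ × ℝ)) (a b : ℝ) (q : ℝ × ℝ) : Prop :=
  q ∈ P ∧ ∀ x ∈ P, a * x.1 + b * x.2 ≤ a * q.1 + b * q.2

section Planar

variable {P : Set (ℝ × ℝ)}

lemma exists_isSupportPt_lexMax (hP : IsCompact P) (hne : P.Nonempty) (a b : ℝ)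
    {g : ℝ × ℝ → ℝ} (hg : Continuous g) :
    ∃ q, IsSupportPt P a b q ∧ ∀ c, IsSupportPt P a b c → g c ≤ g q := by
  have hf : Continuous fun x : ℝ × ℝ => a * x.1 + b * x.2 := by fun_prop
  obtain ⟨m, hmP, hm⟩ := hP.exists_isMaxOn hne hf.continuousOn
  have hK : IsCompact (P ∩ {x | a * m.1 + b * m.2 ≤ a * x.1 + b * x.2}) :=
    hP.inter_right (isClosed_le continuous_const hf)
  obtain ⟨q, ⟨hqP, hq⟩, hqmax⟩ := hK.exists_isMaxOn ⟨m, hmP, mem_ofPred.2 le_rfl⟩ hg.continuousOn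
  exact ⟨q, ⟨hqP, fun x hx => (hm hx).trans hq⟩, fun c hc => hqmax ⟨hc.1, hc.2 m hmP⟩⟩

lemma tendsto_isSupportPt (hP : IsCompact P) {ι : Type*} {l : Filter ι} {α β : ι → ℝ} {a b : ℝ}
    (hα : Tendsto α l (𝓝 a)) (hβ : Tendsto β l (𝓝 b)) {p : ι → ℝ × ℝ} {q : ℝ × ℝ}
    (hp : ∀ᶠ i in l, IsSupportPt P (α i) (β i) (p i)) {g : ℝ × ℝ → ℝ} (hg : Continuous g)
    (hgp : ∀ᶠ i in l, g q ≤ g (p i))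
    (huniq : ∀ c, IsSupportPt P a b c → g q ≤ g c → c = q) : Tendsto p l (𝓝 q) := by
  refine hP.tendsto_nhds_of_unique_mapClusterPt (hp.mono fun i hi => hi.1) fun c hc hcl => ?_
  obtain ⟨U, hU, hUc⟩ := mapClusterPt_iff_ultrafilter.1 hcl
  have h1 := (continuous_fst.tendsto c).comp hUc
  have h2 := (continuous_snd.tendsto c).comp hUc
  refine huniq c ⟨hc, fun x hx => ?_⟩ ?_
  · refine le_of_tendsto_of_tendsto
      (((hα.mono_left hU).mul_const x.1).add ((hβ.mono_left hU).mul_const x.2))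
      (((hα.mono_left hU).mul h1).add ((hβ.mono_left hU).mul h2)) ?_
    filter_upwards [hU hp] with i hi using hi.2 x hx
  · exact ge_of_tendsto ((hg.tendsto c).comp hUc) (hU hgp)

lemma mul_sqrt_lt_mul_sqrt {t t' : ℝ} (ht : -1 < t) (htt : t < t') (ht' : t' < 1) :
    t * √(1 - t' ^ 2) < t' * √(1 - t ^ 2) := by
  have h1 := Real.strictMonoOn_arcsin ⟨ht.le, (htt.trans ht').le⟩ ⟨(ht.trans htt).le, ht'.le⟩ htt
  have h2 := Real.arcsin_lt_pi_div_two.2 ht'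
  have h3 := Real.neg_pi_div_two_lt_arcsin.2 ht
  have h := Real.sin_pos_of_pos_of_lt_pi (sub_pos.2 h1) (by linarith)
  rw [Real.sin_sub, Real.sin_arcsin (ht.trans htt).le ht'.le,
    Real.sin_arcsin ht.le (htt.trans ht').le, Real.cos_arcsin, Real.cos_arcsin] at h
  linarith

lemma sqrt_one_sub_sq_pos {t : ℝ} (ht : t ∈ Ioo (-1 : ℝ) 1) : 0 < √(1 - t ^ 2) :=
  Real.sqrt_pos.2 (by nlinarith [ht.1, ht.2])

lemma IsSupportPt.fst_le {t t' : ℝ} {p p' : ℝ × ℝ} (ht : -1 < t) (htt : t < t') (ht' : t' < 1)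
    (hp : IsSupportPt P t √(1 - t ^ 2) p) (hp' : IsSupportPt P t' √(1 - t' ^ 2) p') :
    p.1 ≤ p'.1 := by
  have hs := sqrt_one_sub_sq_pos ⟨ht, htt.trans ht'⟩
  have hs' := sqrt_one_sub_sq_pos ⟨ht.trans htt, ht'⟩
  have h1 := mul_le_mul_of_nonneg_left (hp.2 _ hp'.1) hs'.le
  have h2 := mul_le_mul_of_nonneg_left (hp'.2 _ hp.1) hs.le
  have h3 := mul_sqrt_lt_mul_sqrt ht htt ht'
  by_contra! hlt
  nlinarith [mul_pos (sub_pos.2 h3) (sub_pos.2 hlt)]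

lemma hasDerivAt_sqrt_one_sub_sq {t : ℝ} (ht : t ∈ Ioo (-1 : ℝ) 1) :
    HasDerivAt (fun x : ℝ => √(1 - x ^ 2)) (-(t / √(1 - t ^ 2))) t := by
  have hs := sqrt_one_sub_sq_pos ht
  convert ((hasDerivAt_pow 2 t).const_sub 1).sqrt (Real.sqrt_pos.1 hs).ne' using 1
  simp
  field_simp

lemma tendsto_slope_of_isSupportPt (hP : IsCompact P) {h : ℝ → ℝ} {p : ℝ → ℝ × ℝ}
    (hp : ∀ t, IsSupportPt P t √(1 - t ^ 2) (p t))
    (hmax : ∀ t c, IsSupportPt P t √(1 - t ^ 2) c → c.1 ≤ (p t).1)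
    (hh : ∀ t, h t = t * (p t).1 + √(1 - t ^ 2) * (p t).2) {t : ℝ} (ht : t ∈ Ioo (-1 : ℝ) 1) :
    Tendsto (fun s => (h s - h t) / (s - t)) (𝓝[>] t)
      (𝓝 ((p t).1 - (p t).2 * (t / √(1 - t ^ 2)))) := by
  have hs := sqrt_one_sub_sq_pos ht
  have hev : ∀ᶠ s in 𝓝[>] t, s ∈ Ioo t 1 := Ioo_mem_nhdsGT ht.2
  have hcont : Continuous fun x : ℝ => √(1 - x ^ 2) := by fun_prop
  have hpt : Tendsto p (𝓝[>] t) (𝓝 (p t)) := by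
    refine tendsto_isSupportPt (g := Prod.fst) hP (tendsto_id.mono_left nhdsWithin_le_nhds)
      ((hcont.tendsto t).mono_left nhdsWithin_le_nhds) (Eventually.of_forall hp) continuous_fst
      (hev.mono fun s hs' => (hp t).fst_le ht.1 hs'.1 hs'.2 (hp s)) fun c hc hle => ?_
    have h1 : c.1 = (p t).1 := le_antisymm (hmax t c hc) hle
    have h2 := hc.2 _ (hp t).1
    have h3 := (hp t).2 _ hc.1
    rw [h1] at h2 h3
    exact Prod.ext h1 (mul_left_cancel₀ hs.ne' (by linarith))
  have hslope : Tendsto (fun s => (√(1 - s ^ 2) - √(1 - t ^ 2)) / (s - t)) (𝓝[>] t)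
      (𝓝 (-(t / √(1 - t ^ 2)))) := by
    have := (hasDerivAt_iff_tendsto_slope.1 (hasDerivAt_sqrt_one_sub_sq ht)).mono_left
      (nhdsGT_le_nhdsNE t)
    simpa only [slope_fun_def_field] using this
  have hlow := (hslope.const_mul (p t).2).const_add (p t).1
  have hupp := ((continuous_fst.tendsto _).comp hpt).add
    (((continuous_snd.tendsto _).comp hpt).mul hslope)
  rw [show (p t).1 - (p t).2 * (t / √(1 - t ^ 2))
    = (p t).1 + (p t).2 * (-(t / √(1 - t ^ 2))) by ring]
  refine tendsto_of_tendsto_of_tendsto_of_le_of_le' hlow hupp ?_ ?_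
  · filter_upwards [self_mem_nhdsWithin] with s (hst : t < s)
    rw [le_div_iff₀ (sub_pos.2 hst), hh s, hh t, add_mul, mul_assoc,
      div_mul_cancel₀ _ (sub_pos.2 hst).ne']
    linarith [(hp s).2 _ (hp t).1]
  · filter_upwards [self_mem_nhdsWithin] with s (hst : t < s)
    simp only [comp_apply]
    rw [div_le_iff₀ (sub_pos.2 hst), hh s, hh t, add_mul, mul_assoc,
      div_mul_cancel₀ _ (sub_pos.2 hst).ne']
    linarith [(hp t).2 _ (hp s).1]

lemma tendsto_snd_isSupportPt_pole (hP : IsCompact P) {σ : ℝ} (hσ : σ ^ 2 = 1) {l : Filter ℝ}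
    (hl : l ≤ 𝓝 σ) (hl' : ∀ᶠ t in l, t ∈ Ioo (-1 : ℝ) 1) {p : ℝ → ℝ × ℝ}
    (hp : ∀ t, IsSupportPt P t √(1 - t ^ 2) (p t)) {q : ℝ × ℝ} (hq : IsSupportPt P σ 0 q)
    (hqmax : ∀ c, IsSupportPt P σ 0 c → c.2 ≤ q.2) :
    Tendsto (fun t => (p t).2) l (𝓝 q.2) := by
  have hσ0 : σ ≠ 0 := by rintro rfl; norm_num at hσ
  have hcont : Continuous fun x : ℝ => √(1 - x ^ 2) := by fun_prop
  have hb : Tendsto (fun x : ℝ => √(1 - x ^ 2)) l (𝓝 0) := by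
    have := (hcont.tendsto σ).mono_left hl
    simpa [hσ] using this
  have hpos : ∀ᶠ t in l, 0 < σ * t :=
    hl ((continuous_const.mul continuous_id).continuousAt.eventually
      (lt_mem_nhds (show 0 < σ * id σ by simp only [id]; nlinarith)))
  refine (continuous_snd.tendsto q).comp (tendsto_isSupportPt (g := Prod.snd) hP hl hb
    (Eventually.of_forall hp) continuous_snd ?_ fun c hc hle => ?_)
  · filter_upwards [hpos, hl'] with t ht ht'
    have hs := sqrt_one_sub_sq_pos ht'
    have h1 := (hp t).2 _ hq.1
    have h2 := hq.2 _ (hp t).1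
    have h3 : t * ((p t).1 - q.1) ≤ 0 := by
      have : t * ((p t).1 - q.1) = σ * t * (σ * ((p t).1 - q.1)) := by
        linear_combination (-t * ((p t).1 - q.1)) * hσ
      rw [this]
      exact mul_nonpos_of_nonneg_of_nonpos ht.le (by linarith)
    exact le_of_mul_le_mul_left (by linarith) hs
  · have h1 := hc.2 _ hq.1
    have h2 := hq.2 _ hc.1
    exact Prod.ext (mul_left_cancel₀ hσ0 (by linarith)) (le_antisymm (hqmax c hc) hle)

end Planar

section Revolution

variable {n : ℕ} {C : Set (Euc n)} {ub : Euc n}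

lemma norm_eAx (n : ℕ) : ‖eAx n‖ = 1 := by simp [eAx]

lemma inner_eAx_self (n : ℕ) : ⟪eAx n, eAx n⟫ = 1 := by
  rw [real_inner_self_eq_norm_sq, norm_eAx, one_pow]

lemma inner_eAx_smul_add {w : Euc n} (hw : ⟪eAx n, w⟫ = 0) (a : ℝ) :
    ⟪eAx n, a • eAx n + w⟫ = a := by
  rw [inner_add_right, real_inner_smul_right, inner_eAx_self, hw, mul_one, add_zero]

lemma inner_eAx_sub_self (y : Euc n) : ⟪eAx n, y - ⟪eAx n, y⟫ • eAx n⟫ = 0 := by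
  rw [inner_sub_right, real_inner_smul_right, inner_eAx_self, mul_one, sub_self]

lemma IsRevBody.smul_add_mem_of_norm_eq (hC : IsRevBody C) {a : ℝ} {v w : Euc n}
    (hv : ⟪eAx n, v⟫ = 0) (hw : ⟪eAx n, w⟫ = 0) (hvw : ‖v‖ = ‖w‖) (h : a • eAx n + v ∈ C) :
    a • eAx n + w ∈ C := by
  have he : (ℝ ∙ (v - w))ᗮ.reflection (eAx n) = eAx n := by
    rw [Submodule.reflection_eq_self_iff, Submodule.mem_orthogonal_singleton_iff_inner_left,
      inner_sub_right, hv, hw, sub_self]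
  rw [← hC.2.2.2 _ he]
  exact ⟨_, h, by rw [map_add, map_smul, he, Submodule.reflection_sub hvw]⟩

lemma IsRevBody.smul_add_mem_of_norm_le (hC : IsRevBody C) {a : ℝ} {v w : Euc n}
    (hv : ⟪eAx n, v⟫ = 0) (hw : ⟪eAx n, w⟫ = 0) (hwv : ‖w‖ ≤ ‖v‖) (h : a • eAx n + v ∈ C) :
    a • eAx n + w ∈ C := by
  obtain ⟨z, hz, hzv, c, hc0, hc1, rfl⟩ :
      ∃ z : Euc n, ⟪eAx n, z⟫ = 0 ∧ ‖v‖ = ‖z‖ ∧ ∃ c : ℝ, 0 ≤ c ∧ c ≤ 1 ∧ w = c • z := by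
    rcases eq_or_ne w 0 with rfl | hw0
    · exact ⟨v, hv, rfl, 0, le_rfl, zero_le_one, by simp⟩
    have hwpos : 0 < ‖w‖ := norm_pos_iff.2 hw0
    have hvpos := hwpos.trans_le hwv
    refine ⟨(‖v‖ / ‖w‖) • w, by rw [real_inner_smul_right, hw, mul_zero], ?_, ‖w‖ / ‖v‖,
      by positivity, (div_le_one hvpos).2 hwv, ?_⟩
    · rw [norm_smul, norm_div, norm_norm, norm_norm, div_mul_cancel₀ _ hwpos.ne']
    · rw [smul_smul, div_mul_div_cancel₀ hvpos.ne', div_self hwpos.ne', one_smul]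
  have h1 := hC.smul_add_mem_of_norm_eq hv hz hzv h
  have h2 := hC.smul_add_mem_of_norm_eq hv (w := -z) (by rw [inner_neg_right, hz, neg_zero])
    (by rw [norm_neg, hzv]) h
  have := hC.2.2.1 h1 h2 (show 0 ≤ (1 + c) / 2 by linarith) (show 0 ≤ (1 - c) / 2 by linarith)
    (by ring)
  convert this using 1
  module

lemma isCompact_profile (hC : IsRevBody C) : IsCompact (profile C ub) :=
  hC.2.1.image (by fun_prop)

lemma profile_nonempty (hC : IsRevBody C) : (profile C ub).Nonempty := hC.1.image _

lemma IsRevBody.mem_of_mem_profile (hC : IsRevBody C) (hub : ‖ub‖ = 1) (horth : ⟪eAx n, ub⟫ = 0)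
    {q : ℝ × ℝ} (hq : q ∈ profile C ub) {w : Euc n} (hw : ⟪eAx n, w⟫ = 0) (hwq : ‖w‖ ≤ |q.2|) :
    q.1 • eAx n + w ∈ C := by
  obtain ⟨y, hy, rfl⟩ := hq
  refine hC.smul_add_mem_of_norm_le (inner_eAx_sub_self y) hw (hwq.trans ?_)
    (by rwa [add_sub_cancel])
  have := abs_real_inner_le_norm ub (y - ⟪eAx n, y⟫ • eAx n)
  rwa [inner_sub_right, real_inner_smul_right, real_inner_comm (eAx n) ub, horth, mul_zero,
    sub_zero, hub, one_mul] at this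

lemma IsRevBody.mk_norm_mem_profile (hC : IsRevBody C) (hub : ‖ub‖ = 1)
    (horth : ⟪eAx n, ub⟫ = 0) {a : ℝ} {w : Euc n} (hw : ⟪eAx n, w⟫ = 0)
    (h : a • eAx n + w ∈ C) : (a, ‖w‖) ∈ profile C ub := by
  have ho : ⟪eAx n, ‖w‖ • ub⟫ = 0 := by rw [real_inner_smul_right, horth, mul_zero]
  refine ⟨a • eAx n + ‖w‖ • ub, hC.smul_add_mem_of_norm_eq hw ho
    (by rw [norm_smul, norm_norm, hub, mul_one]) h, Prod.ext (inner_eAx_smul_add ho a) ?_⟩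
  simp only
  rw [inner_add_right, real_inner_smul_right, real_inner_smul_right, real_inner_comm, horth,
    real_inner_self_eq_norm_sq, hub]
  ring

lemma suppFn_eq_of_isSupportPt {a b : ℝ} {q : ℝ × ℝ} (hq : IsSupportPt (profile C ub) a b q) :
    suppFn C (a • eAx n + b • ub) = a * q.1 + b * q.2 := by
  have key : ∀ x : Euc n, ⟪x, a • eAx n + b • ub⟫ = a * ⟪eAx n, x⟫ + b * ⟪ub, x⟫ := fun x => by
    rw [real_inner_comm, inner_add_left, real_inner_smul_left, real_inner_smul_left]
  obtain ⟨⟨y, hy, rfl⟩, hmax⟩ := hq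
  refine IsGreatest.csSup_eq ⟨⟨y, hy, key y⟩, ?_⟩
  rintro _ ⟨x, hx, rfl⟩
  exact (key x).trans_le (hmax _ ⟨x, hx, rfl⟩)

/-- The cross-section at height `q.1` is a disk, if `q` is the outermost point of the profile at
that height. -/
lemma IsRevBody.inter_height_eq (hC : IsRevBody C) (hub : ‖ub‖ = 1) (horth : ⟪eAx n, ub⟫ = 0)
    {q : ℝ × ℝ} (hq : q ∈ profile C ub) (hmax : ∀ b, (q.1, b) ∈ profile C ub → b ≤ q.2) :
    C ∩ {y | ⟪eAx n, y⟫ = q.1} =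
      (fun w => q.1 • eAx n + w) '' {w | ⟪eAx n, w⟫ = 0 ∧ ‖w‖ ≤ q.2} := by
  ext y
  constructor
  · rintro ⟨hy, hyq : ⟪eAx n, y⟫ = q.1⟩
    have ho := inner_eAx_sub_self y
    rw [hyq] at ho
    exact ⟨y - q.1 • eAx n, ⟨ho, hmax _ (hC.mk_norm_mem_profile hub horth ho
      (by rwa [add_sub_cancel]))⟩, add_sub_cancel _ _⟩
  · rintro ⟨w, ⟨hw, hwq⟩, rfl⟩
    exact ⟨hC.mem_of_mem_profile hub horth hq hw (hwq.trans (le_abs_self _)),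
      inner_eAx_smul_add hw _⟩

/-- The face at the pole `σ • e_n`, `σ = ±1`, is a disk. -/
lemma IsRevBody.face_pole_eq (hC : IsRevBody C) (hub : ‖ub‖ = 1) (horth : ⟪eAx n, ub⟫ = 0)
    {σ : ℝ} (hσ : σ ≠ 0) {q : ℝ × ℝ} (hq : IsSupportPt (profile C ub) σ 0 q)
    (hqmax : ∀ c, IsSupportPt (profile C ub) σ 0 c → c.2 ≤ q.2) :
    face C (σ • eAx n) =
      (fun w => q.1 • eAx n + w) '' {w | ⟪eAx n, w⟫ = 0 ∧ ‖w‖ ≤ q.2} := by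
  rw [← hC.inter_height_eq hub horth hq.1 fun b hb => hqmax (q.1, b)
    ⟨hb, fun x hx => by simpa using hq.2 x hx⟩]
  have hsupp := suppFn_eq_of_isSupportPt hq
  rw [zero_smul, add_zero, zero_mul, add_zero] at hsupp
  ext y
  refine and_congr_right fun _ => ?_
  rw [hsupp, real_inner_smul_right, real_inner_comm, mul_right_inj' hσ, mem_ofPred_eq]

/-- A support point of the profile, turned to the direction `u`, is in the face of `C`. -/
lemma IsRevBody.exists_mem_face (hC : IsRevBody C) (hub : ‖ub‖ = 1) (horth : ⟪eAx n, ub⟫ = 0)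
    {u : Euc n} (hu : ‖u‖ = 1) (ht : ⟪eAx n, u⟫ ∈ Ioo (-1 : ℝ) 1) {q : ℝ × ℝ}
    (hq : IsSupportPt (profile C ub) ⟪eAx n, u⟫ √(1 - ⟪eAx n, u⟫ ^ 2) q) :
    ∃ x ∈ face C u, ⟪eAx n, x⟫ = q.1 := by
  set t := ⟪eAx n, u⟫ with htdef
  set s := √(1 - t ^ 2)
  have hs : 0 < s := sqrt_one_sub_sq_pos ht
  have hs2 : s ^ 2 = 1 - t ^ 2 := Real.sq_sqrt (Real.sqrt_pos.1 hs).le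
  set v : Euc n := u - t • eAx n
  have hv : ⟪eAx n, v⟫ = 0 := inner_eAx_sub_self u
  have hu' : u = t • eAx n + v := (add_sub_cancel _ _).symm
  have hvs : ‖v‖ = s := by
    have h1 : ‖u‖ ^ 2 = t ^ 2 + ‖v‖ ^ 2 := by
      rw [hu', norm_add_sq_real, real_inner_smul_left, hv, norm_smul, norm_eAx, mul_one,
        Real.norm_eq_abs, sq_abs]
      ring
    rw [hu] at h1
    exact (pow_left_inj₀ (norm_nonneg _) hs.le two_ne_zero).1 (by linarith)
  have key : ∀ (a : ℝ) (w : Euc n), ⟪eAx n, w⟫ = 0 → ⟪a • eAx n + w, u⟫ = t * a + ⟪w, v⟫ := by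
    intro a w hw
    rw [inner_add_left, real_inner_smul_left, ← htdef, hu', inner_add_right,
      real_inner_smul_right, real_inner_comm, hw]
    ring
  have hw : ⟪eAx n, (q.2 / s) • v⟫ = 0 := by rw [real_inner_smul_right, hv, mul_zero]
  have hx : q.1 • eAx n + (q.2 / s) • v ∈ C := by
    refine hC.mem_of_mem_profile hub horth hq.1 hw ?_
    rw [norm_smul, hvs, norm_div, Real.norm_eq_abs, Real.norm_of_nonneg hs.le,
      div_mul_cancel₀ _ hs.ne']
  refine ⟨_, ⟨hx, Eq.symm (IsGreatest.csSup_eq ?_)⟩, inner_eAx_smul_add hw _⟩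
  refine ⟨⟨_, hx, rfl⟩, ?_⟩
  rintro _ ⟨y, hy, rfl⟩
  have hyo := inner_eAx_sub_self y
  have hyd : y = ⟪eAx n, y⟫ • eAx n + (y - ⟪eAx n, y⟫ • eAx n) := (add_sub_cancel _ _).symm
  have hym := hq.2 _ (hC.mk_norm_mem_profile hub horth hyo (hyd ▸ hy))
  have hcs := real_inner_le_norm (y - ⟪eAx n, y⟫ • eAx n) v
  have h1 := key ⟪eAx n, y⟫ _ hyo
  rw [← hyd] at h1
  simp only
  rw [h1, key _ _ hw, real_inner_smul_left, real_inner_self_eq_norm_sq, hvs]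
  rw [hvs] at hcs
  have : q.2 / s * s ^ 2 = s * q.2 := by field_simp
  simp only at hym
  linarith

end Revolution

/-- Horizontal cross-sections of a body of revolution through a boundary
point with outer normal `u` are disks of radius `R_C(⟨e_n,u⟩)`, and the faces at the poles
`±e_n` are disks of radius `lim_{t→±1} R_C(t)` at heights `±h̄_C(±1)`. -/
theorem revBody_cross_sections {n : ℕ} (hn : 1 ≤ n) (C : Set (Euc n)) (hC : IsRevBody C)
    (ub : Euc n) (hub : ‖ub‖ = 1) (horth : ⟪eAx n, ub⟫ = 0)
    (u : Euc n) (hu : ‖u‖ = 1) (ht : ⟪eAx n, u⟫ ∈ Set.Ioo (-1 : ℝ) 1) :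
    (∃ x ∈ face C u,
      C ∩ {y : Euc n | ⟪eAx n, y⟫ = ⟪eAx n, x⟫} =
        (fun w => ⟪eAx n, x⟫ • eAx n + w) ''
          {w : Euc n | ⟪eAx n, w⟫ = 0 ∧ ‖w‖ ≤ RC C ub ⟪eAx n, u⟫}) ∧
    (∃ rp : ℝ, Tendsto (RC C ub) (𝓝[<] (1 : ℝ)) (𝓝 rp) ∧
      face C (eAx n) =
        (fun w => hbar C ub 1 • eAx n + w) ''
          {w : Euc n | ⟪eAx n, w⟫ = 0 ∧ ‖w‖ ≤ rp}) ∧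
    (∃ rm : ℝ, Tendsto (RC C ub) (𝓝[>] (-1 : ℝ)) (𝓝 rm) ∧
      face C (-eAx n) =
        (fun w => (-hbar C ub (-1)) • eAx n + w) ''
          {w : Euc n | ⟪eAx n, w⟫ = 0 ∧ ‖w‖ ≤ rm}) := by
  have hP : IsCompact (profile C ub) := isCompact_profile hC
  have hne : (profile C ub).Nonempty := profile_nonempty hC
  choose p hp hpmax using fun t : ℝ =>
    exists_isSupportPt_lexMax hP hne t √(1 - t ^ 2) continuous_fst
  have hh : ∀ t, hbar C ub t = t * (p t).1 + √(1 - t ^ 2) * (p t).2 := fun t =>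
    suppFn_eq_of_isSupportPt (hp t)
  have hR : ∀ t ∈ Ioo (-1 : ℝ) 1, RC C ub t = (p t).2 := by
    intro t ht
    have hs := sqrt_one_sub_sq_pos ht
    have hs2 : √(1 - t ^ 2) ^ 2 = 1 - t ^ 2 := Real.sq_sqrt (Real.sqrt_pos.1 hs).le
    rw [RC, rightDeriv, (tendsto_slope_of_isSupportPt hP hp hpmax hh ht).limUnder_eq, hh]
    field_simp
    linear_combination (p t).2 * hs2
  have pole : ∀ σ : ℝ, σ ^ 2 = 1 → ∀ l ≤ 𝓝 σ, (∀ᶠ t in l, t ∈ Ioo (-1 : ℝ) 1) →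
      ∃ r, Tendsto (RC C ub) l (𝓝 r) ∧ face C (σ • eAx n) =
        (fun w => (σ * hbar C ub σ) • eAx n + w) '' {w | ⟪eAx n, w⟫ = 0 ∧ ‖w‖ ≤ r} := by
    intro σ hσ l hl hl'
    have hσ0 : σ ≠ 0 := by rintro rfl; norm_num at hσ
    obtain ⟨q, hq, hqmax⟩ := exists_isSupportPt_lexMax hP hne σ 0 continuous_snd
    refine ⟨q.2, (tendsto_snd_isSupportPt_pole hP hσ hl hl' hp hq hqmax).congr'
      (hl'.mono fun t ht => (hR t ht).symm), ?_⟩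
    have hq1 : σ * hbar C ub σ = q.1 := by
      rw [hbar, hσ, sub_self, Real.sqrt_zero, suppFn_eq_of_isSupportPt hq]
      linear_combination q.1 * hσ
    rw [hq1, hC.face_pole_eq hub horth hσ0 hq hqmax]
  refine ⟨?_, ?_, ?_⟩
  · obtain ⟨x, hx, hxq⟩ := hC.exists_mem_face hub horth hu ht (hp _)
    refine ⟨x, hx, ?_⟩
    rw [hxq, hR _ ht]
    refine hC.inter_height_eq hub horth (hp _).1 fun b hb => ?_
    exact le_of_mul_le_mul_left (by simpa using (hp ⟪eAx n, u⟫).2 _ hb) (sqrt_one_sub_sq_pos ht)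
  · simpa using pole 1 (by norm_num) _ nhdsWithin_le_nhds (Ioo_mem_nhdsLT (by norm_num))
  · simpa using pole (-1) (by norm_num) _ nhdsWithin_le_nhds (Ioo_mem_nhdsGT (by norm_num))
end
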